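/- arXiv:0902.1358 — 3 statements merged into one kernel-verified Lean document; each statement's English description precedes it below -/
import Mathlib

section
/- There exists a constant C > 1 such that for every integer x ≥ 2 and every element W of N(∞) with |W| ≤ x, there is an expression W = ∏_{j=1}^{L} X_j R_j^{ε_j} X_j^{-1} in F with X_j ∈ F, R_j ∈ R*(∞), ε_j = ±1, such that: the number of indices j with h(R_j) = 0 is at most C·x²; for every i with 1 ≤ i ≤ log₂(x), the number of indices j with h(R_j) = i is at most C·x²/2^{i−1}; and there is no index j with h(R_j) > log₂(x). -/
/-- The four-letter alphabet `{a, b, c, d}`. -/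
inductive L4 : Type
  | a | b | c | d
  deriving DecidableEq

/-- The free group `F = F(a, b, c, d)`. -/
abbrev F4 : Type := FreeGroup L4

def ga : F4 := FreeGroup.of L4.a
def gb : F4 := FreeGroup.of L4.b
def gc : F4 := FreeGroup.of L4.c
def gd : F4 := FreeGroup.of L4.d

/-- The endomorphism `σ` of `F(a,b,c,d)`:
`σ(a) = aca`, `σ(b) = d`, `σ(c) = b`, `σ(d) = c`. -/
def sigma : F4 →* F4 :=
  FreeGroup.lift fun x => match x with
    | L4.a => ga * gc * ga
    | L4.b => gd
    | L4.c => gb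
    | L4.d => gc

/-- The Lysenok relator set
`R(∞) = {a², b², c², d², bcd} ∪ {σⁱ((ad)⁴) : i ≥ 0} ∪ {σⁱ((adacac)⁴) : i ≥ 0}`. -/
def Rinf : Set F4 :=
  {ga ^ 2, gb ^ 2, gc ^ 2, gd ^ 2, gb * gc * gd}
    ∪ {w | ∃ i : ℕ, w = (⇑sigma)^[i] ((ga * gd) ^ 4)}
    ∪ {w | ∃ i : ℕ, w = (⇑sigma)^[i] ((ga * gd * ga * gc * ga * gc) ^ 4)}

/-- `W` is a product of `L` conjugates of elements of `R ∪ R⁻¹`. -/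
def IsProdConjPM {G : Type*} [Group G] (R : Set G) (L : ℕ) (W : G) : Prop :=
  ∃ f : Fin L → G,
    (∀ j, ∃ x r, r ∈ R ∧ (f j = x * r * x⁻¹ ∨ f j = x * r⁻¹ * x⁻¹)) ∧
    W = (List.ofFn f).prod

/-- The extended relator set `R*(∞) = R(∞) ∪ {σⁱ(a²) : i ≥ 1}`. -/
def RinfStar : Set F4 :=
  Rinf ∪ {w | ∃ i : ℕ, 1 ≤ i ∧ w = (⇑sigma)^[i] (ga ^ 2)}

/-- The partition `R*(∞) = ⋃ᵢ S*(i)` by height: `S*(0)` consists of the seven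
relators `a², b², c², d², bcd, (ad)⁴, (adacac)⁴`, and for `i ≥ 1`,
`S*(i) = {σⁱ((ad)⁴), σⁱ((adacac)⁴), σⁱ(a²)}`. -/
def ShStar : ℕ → Set F4
  | 0 => {ga ^ 2, gb ^ 2, gc ^ 2, gd ^ 2, gb * gc * gd,
          (ga * gd) ^ 4, (ga * gd * ga * gc * ga * gc) ^ 4}
  | (i + 1) => {(⇑sigma)^[i + 1] ((ga * gd) ^ 4),
                (⇑sigma)^[i + 1] ((ga * gd * ga * gc * ga * gc) ^ 4),
                (⇑sigma)^[i + 1] (ga ^ 2)}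

/-! ### Representations with exact height counts -/

inductive HRep : (ℕ → ℕ) → F4 → Prop
  | one : HRep 0 1
  | step {n : ℕ → ℕ} {W : F4} (X R : F4) (e : ℤ) (i : ℕ) (h : HRep n W) (hR : R ∈ ShStar i)
      (he : e = 1 ∨ e = -1) : HRep (n + Pi.single i 1) (X * R ^ e * X⁻¹ * W)

theorem HRep.mul {n m : ℕ → ℕ} {u v : F4} (h : HRep n u) (h' : HRep m v) : HRep (n + m) (u * v) := by
  induction h with
  | one => simpa using h'
  | @step n W X R e i h hR he ih =>
    have := HRep.step X R e i ih hR he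
    convert this using 1
    · abel
    · group

theorem HRep.conj {n : ℕ → ℕ} {u : F4} (g : F4) (h : HRep n u) : HRep n (g * u * g⁻¹) := by
  induction h with
  | one => simpa using HRep.one
  | @step n W X R e i h hR he ih =>
    have := HRep.step (g * X) R e i ih hR he
    convert this using 1
    group

theorem HRep.single {R : F4} {i : ℕ} (hR : R ∈ ShStar i) (X : F4) (e : ℤ) (he : e = 1 ∨ e = -1) :
    HRep (Pi.single i 1) (X * R ^ e * X⁻¹) := by
  have := HRep.step X R e i HRep.one hR he
  simpa using this

theorem HRep.inv {n : ℕ → ℕ} {u : F4} (h : HRep n u) : HRep n u⁻¹ := by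
  induction h with
  | one => simpa using HRep.one
  | @step n W X R e i h hR he ih =>
    have := ih.mul (HRep.single hR X (-e) (by omega))
    convert this using 1
    group

theorem sigma_shift {i : ℕ} {R : F4} (hR : R ∈ ShStar (i + 1)) : sigma R ∈ ShStar (i + 2) := by
  simp only [ShStar, Set.mem_insert_iff, Set.mem_singleton_iff] at hR ⊢
  rcases hR with h | h | h <;> rw [h, ← Function.iterate_succ_apply' (⇑sigma)] <;> simp

@[simp] theorem sigma_a : sigma ga = ga * gc * ga := by simp [sigma, ga]
@[simp] theorem sigma_b : sigma gb = gd := by simp [sigma, gb]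
@[simp] theorem sigma_c : sigma gc = gb := by simp [sigma, gc]
@[simp] theorem sigma_d : sigma gd = gc := by simp [sigma, gd]

theorem sigma_zero {R : F4} (hR : R ∈ ShStar 0) :
    sigma R ∈ ShStar 1 ∨ ∃ g, ∃ R' ∈ ShStar 0, sigma R = g * R' * g⁻¹ := by
  simp only [ShStar, Set.mem_insert_iff, Set.mem_singleton_iff] at hR ⊢
  rcases hR with h | h | h | h | h | h | h <;> subst h
  · left; simp
  · right; exact ⟨1, gd ^ 2, by simp, by simp⟩
  · right; exact ⟨1, gb ^ 2, by simp, by simp⟩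
  · right; exact ⟨1, gc ^ 2, by simp, by simp⟩
  · right; exact ⟨gd, gb * gc * gd, by simp, by simp [mul_assoc]⟩
  · left; simp
  · left; simp

theorem HRep.map_sigma {n : ℕ → ℕ} {u : F4} (h : HRep n u) :
    ∃ m, HRep m (sigma u) ∧ m 0 ≤ n 0 ∧ m 1 ≤ n 0 ∧ ∀ i, m (i + 2) = n (i + 1) := by
  induction h with
  | one => exact ⟨0, by simpa using HRep.one, by simp⟩
  | @step n W X R e i h hR he ih =>
    obtain ⟨m, hm, h0, h1, h2⟩ := ih
    rcases i with _ | i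
    · rcases sigma_zero hR with h | ⟨g, R', h, hg⟩
      · refine ⟨m + Pi.single 1 1, ?_, ?_, ?_, ?_⟩
        · simpa using HRep.step (_root_.sigma X) _ e 1 hm h he
        · simp; omega
        · simp; omega
        · intro i; simp [h2, Pi.single_apply]
      · refine ⟨m + Pi.single 0 1, ?_, ?_, ?_, ?_⟩
        · have := HRep.step (_root_.sigma X * g) _ e 0 hm h he
          convert this using 1
          simp only [map_mul, map_zpow, map_inv, hg, conj_zpow]
          group
        · simp; omega
        · simp; omega
        · intro i; simp [h2, Pi.single_apply]
    · refine ⟨m + Pi.single (i + 2) 1, ?_, ?_, ?_, ?_⟩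
      · simpa using HRep.step (_root_.sigma X) _ e (i + 2) hm (sigma_shift hR) he
      · simp [h0]
      · simp [h1]
      · intro j
        simp [h2, Pi.single_apply]

/-! ### Cost: relators of height at most one -/

def Cost (K : ℕ) (u : F4) : Prop := ∃ m, HRep m u ∧ m 0 ≤ K ∧ m 1 ≤ K ∧ ∀ i, m (i + 2) = 0

theorem Cost.mono {K K' : ℕ} {u : F4} (h : Cost K u) (hK : K ≤ K') : Cost K' u := by
  obtain ⟨m, h, h0, h1, h2⟩ := h
  exact ⟨m, h, by omega, by omega, h2⟩

theorem Cost.one : Cost 0 1 := ⟨0, HRep.one, by simp⟩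

theorem Cost.mul {K K' : ℕ} {u v : F4} (h : Cost K u) (h' : Cost K' v) : Cost (K + K') (u * v) := by
  obtain ⟨m, h, h0, h1, h2⟩ := h
  obtain ⟨m', h', h0', h1', h2'⟩ := h'
  exact ⟨m + m', h.mul h', by simp; omega, by simp; omega, by simp [h2, h2']⟩

theorem Cost.conj {K : ℕ} {u : F4} (g : F4) (h : Cost K u) : Cost K (g * u * g⁻¹) := by
  obtain ⟨m, h, h0⟩ := h
  exact ⟨m, h.conj g, h0⟩

theorem Cost.inv {K : ℕ} {u : F4} (h : Cost K u) : Cost K u⁻¹ := by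
  obtain ⟨m, h, h0⟩ := h
  exact ⟨m, h.inv, h0⟩

theorem Cost.rel0 {R : F4} (hR : R ∈ ShStar 0) : Cost 1 R :=
  ⟨_, by simpa using HRep.single hR 1 1 (by simp), by simp⟩

theorem Cost.rel1 {R : F4} (hR : R ∈ ShStar 1) : Cost 1 R :=
  ⟨_, by simpa using HRep.single hR 1 1 (by simp), by simp⟩

def Near (K : ℕ) (u v : F4) : Prop := Cost K (u * v⁻¹)

theorem Near.rfl {u : F4} : Near 0 u u := by simpa [Near] using Cost.one

theorem Near.mono {K K' : ℕ} {u v : F4} (h : Near K u v) (hK : K ≤ K') : Near K' u v :=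
  Cost.mono h hK

theorem Near.symm {K : ℕ} {u v : F4} (h : Near K u v) : Near K v u := by
  have := Cost.inv h
  simpa [Near] using this

theorem Near.trans {K K' : ℕ} {u v w : F4} (h : Near K u v) (h' : Near K' v w) :
    Near (K + K') u w := by
  have := Cost.mul h h'
  simpa [Near] using this

theorem Near.mul {K K' : ℕ} {u v u' v' : F4} (h : Near K u v) (h' : Near K' u' v') :
    Near (K + K') (u * u') (v * v') := by
  have := (Cost.conj u h').mul h
  refine Cost.mono (K := K' + K) ?_ (by omega)
  convert this using 1
  group

theorem Near.inv {K : ℕ} {u v : F4} (h : Near K u v) : Near K u⁻¹ v⁻¹ := by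
  have := Cost.conj u⁻¹ h.symm
  unfold Near
  convert this using 1
  group

theorem Near.mul_left {K : ℕ} {u v : F4} (g : F4) (h : Near K u v) : Near K (g * u) (g * v) := by
  simpa using Near.rfl.mul h

theorem Near.mul_right {K : ℕ} {u v : F4} (g : F4) (h : Near K u v) : Near K (u * g) (v * g) := by
  simpa using h.mul Near.rfl

/-- The elements which are products of conjugates of relators of height at most one. -/
def N01 : Subgroup F4 where
  carrier := {u | ∃ K, Cost K u}
  one_mem' := ⟨0, Cost.one⟩
  mul_mem' := by
    rintro u v ⟨K, h⟩ ⟨K', h'⟩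
    exact ⟨_, h.mul h'⟩
  inv_mem' := by
    rintro u ⟨K, h⟩
    exact ⟨_, h.inv⟩

instance N01_normal : N01.Normal := ⟨by
  rintro u ⟨K, h⟩ g
  exact ⟨_, h.conj g⟩⟩

def qq : F4 →* F4 ⧸ N01 := QuotientGroup.mk' N01

theorem qq_eq {u v : F4} : qq u = qq v ↔ ∃ K, Near K u v := by
  rw [eq_comm]
  simp only [qq, QuotientGroup.mk'_apply]
  rw [QuotientGroup.eq, ← Subgroup.Normal.mem_comm_iff (nH := N01_normal)]
  rfl

theorem near_fin {ι : Type*} [Finite ι] (u v : ι → F4) (h : ∀ i, qq (u i) = qq (v i)) :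
    ∃ K, ∀ i, Near K (u i) (v i) := by
  have := Fintype.ofFinite ι
  choose K hK using fun i => qq_eq.1 (h i)
  exact ⟨∑ i, K i, fun i => (hK i).mono (Finset.single_le_sum (fun _ _ => Nat.zero_le _) (Finset.mem_univ i))⟩

theorem qq_rel0 {R : F4} (hR : R ∈ ShStar 0) : qq R = 1 := by
  rw [← map_one qq, qq_eq]
  exact ⟨1, by simpa [Near] using Cost.rel0 hR⟩

theorem qq_rel1 {R : F4} (hR : R ∈ ShStar 1) : qq R = 1 := by
  rw [← map_one qq, qq_eq]
  exact ⟨1, by simpa [Near] using Cost.rel1 hR⟩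

theorem qaa : qq ga * qq ga = 1 := by
  rw [← map_mul, ← sq]; exact qq_rel0 (by simp [ShStar])
theorem qbb : qq gb * qq gb = 1 := by
  rw [← map_mul, ← sq]; exact qq_rel0 (by simp [ShStar])
theorem qcc : qq gc * qq gc = 1 := by
  rw [← map_mul, ← sq]; exact qq_rel0 (by simp [ShStar])
theorem qdd : qq gd * qq gd = 1 := by
  rw [← map_mul, ← sq]; exact qq_rel0 (by simp [ShStar])
theorem qbcd : qq gb * qq gc * qq gd = 1 := by
  rw [← map_mul, ← map_mul]; exact qq_rel0 (by simp [ShStar])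
theorem qad : (qq ga * qq gd) ^ 4 = 1 := by
  rw [← map_mul, ← map_pow]; exact qq_rel0 (by simp [ShStar])
theorem qadacac : (qq ga * qq gd * qq ga * qq gc * qq ga * qq gc) ^ 4 = 1 := by
  simp only [← map_mul, ← map_pow]; exact qq_rel0 (by simp [ShStar])
theorem qacac : (qq ga * qq gc * qq ga * qq gc) ^ 4 = 1 := by
  simp only [← map_mul, ← map_pow]; exact qq_rel1 (by simp [ShStar])

/-! ### Dihedral groups -/

theorem dihedral_form {G : Type*} [Group G] {s t : G} (hs : s * s = 1) (ht : t * t = 1)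
    (f : F4 →* G) (hf : ∀ y, f (FreeGroup.of y) = 1 ∨ f (FreeGroup.of y) = s ∨ f (FreeGroup.of y) = t)
    (w : F4) : ∃ k : ℤ, f w = (s * t) ^ k ∨ f w = (s * t) ^ k * s := by
  have hs' : s⁻¹ = s := inv_eq_of_mul_eq_one_left hs
  have ht' : t⁻¹ = t := inv_eq_of_mul_eq_one_left ht
  have hc : ∀ k : ℤ, s * (s * t) ^ k = (s * t) ^ (-k) * s := by
    intro k
    have : s * (s * t) ^ k * s⁻¹ = (s * t) ^ (-k) := by
      rw [← conj_zpow, zpow_neg, ← inv_zpow]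
      congr 1
      simp only [mul_inv_rev, hs', ht', mul_assoc]
      rw [← mul_assoc, hs, one_mul]
    rw [← this]; simp
  have hgen : ∀ y, ∃ k : ℤ, f (FreeGroup.of y) = (s * t) ^ k ∨ f (FreeGroup.of y) = (s * t) ^ k * s := by
    intro y
    rcases hf y with h | h | h
    · exact ⟨0, Or.inl (by simp [h])⟩
    · exact ⟨0, Or.inr (by simp [h])⟩
    · refine ⟨-1, Or.inr ?_⟩
      rw [h]; simp [ht', hs', mul_assoc, hs]
  induction w using FreeGroup.induction_on with
  | C1 => exact ⟨0, Or.inl (by simp)⟩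
  | of y => exact hgen y
  | inv_of y h =>
    obtain ⟨k, h | h⟩ := h
    · exact ⟨-k, Or.inl (by simp [h])⟩
    · refine ⟨k, Or.inr ?_⟩
      have := hc (-k)
      rw [neg_neg] at this
      rw [← this, map_inv, h]; simp [hs']
  | mul u v hu hv =>
    obtain ⟨i, hi⟩ := hu
    obtain ⟨j, hj⟩ := hv
    rw [map_mul]
    rcases hi with hi | hi <;> rcases hj with hj | hj <;> rw [hi, hj]
    · exact ⟨i + j, Or.inl (by rw [zpow_add])⟩
    · exact ⟨i + j, Or.inr (by rw [zpow_add, mul_assoc])⟩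
    · exact ⟨i - j, Or.inr (by rw [mul_assoc, hc, sub_eq_add_neg, zpow_add, mul_assoc])⟩
    · refine ⟨i - j, Or.inl ?_⟩
      rw [mul_assoc, ← mul_assoc s, hc, mul_assoc _ s s, hs, mul_one, sub_eq_add_neg, zpow_add]

theorem dihedral_pow {G : Type*} [Group G] {s t : G} (hs : s * s = 1) (ht : t * t = 1)
    (hst : (s * t) ^ 4 = 1)
    (f : F4 →* G) (hf : ∀ y, f (FreeGroup.of y) = 1 ∨ f (FreeGroup.of y) = s ∨ f (FreeGroup.of y) = t)
    (w : F4) : (f w) ^ 4 = 1 := by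
  have hs' : s⁻¹ = s := inv_eq_of_mul_eq_one_left hs
  have ht' : t⁻¹ = t := inv_eq_of_mul_eq_one_left ht
  obtain ⟨k, h | h⟩ := dihedral_form hs ht f hf w
  · rw [h, ← zpow_natCast, ← zpow_mul, mul_comm, zpow_mul, zpow_natCast, hst, one_zpow]
  · have : f w * f w = 1 := by
      have h3 : s * (s * t) ^ k * s⁻¹ = (s * t) ^ (-k) := by
        rw [← conj_zpow, zpow_neg, ← inv_zpow]
        congr 1
        simp only [mul_inv_rev, hs', ht', mul_assoc]
        rw [← mul_assoc, hs, one_mul]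
      rw [hs'] at h3
      rw [h, mul_assoc, ← mul_assoc s, h3]; simp
    rw [show 4 = 2 * 2 from rfl, pow_mul, sq (f w), this, one_pow]

theorem dihedral_fin {G : Type*} [Group G] {s t : G} (hs : s * s = 1) (ht : t * t = 1)
    (hst : (s * t) ^ 4 = 1)
    (f : F4 →* G) (hf : ∀ y, f (FreeGroup.of y) = 1 ∨ f (FreeGroup.of y) = s ∨ f (FreeGroup.of y) = t)
    (w : F4) : ∃ k : Fin 4, f w = (s * t) ^ (k : ℕ) ∨ f w = (s * t) ^ (k : ℕ) * s := by
  obtain ⟨k, h⟩ := dihedral_form hs ht f hf w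
  have hk : (s * t) ^ k = (s * t) ^ (k % 4).toNat := by
    rw [← zpow_natCast, Int.toNat_of_nonneg (by omega)]
    conv_lhs => rw [← Int.emod_add_mul_ediv k 4]
    rw [zpow_add, zpow_mul, show (4 : ℤ) = ((4 : ℕ) : ℤ) from rfl, zpow_natCast (s * t) 4, hst]
    simp
  rw [hk] at h
  exact ⟨⟨(k % 4).toNat, by omega⟩, h⟩
/-! ### The quotient by the full normal closure and the splitting -/

abbrev NI : Subgroup F4 := Subgroup.normalClosure Rinf

def gq : F4 →* F4 ⧸ NI := QuotientGroup.mk' NI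

theorem gq_one {u : F4} : gq u = 1 ↔ u ∈ NI := by
  simp [gq]

theorem gq_rel {R : F4} (hR : R ∈ Rinf) : gq R = 1 :=
  gq_one.2 (Subgroup.subset_normalClosure hR)

theorem gaa : gq ga * gq ga = 1 := by
  rw [← map_mul, ← sq]; exact gq_rel (by simp [Rinf])
theorem gbb : gq gb * gq gb = 1 := by
  rw [← map_mul, ← sq]; exact gq_rel (by simp [Rinf])
theorem gcc : gq gc * gq gc = 1 := by
  rw [← map_mul, ← sq]; exact gq_rel (by simp [Rinf])
theorem gdd : gq gd * gq gd = 1 := by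
  rw [← map_mul, ← sq]; exact gq_rel (by simp [Rinf])
theorem gbcd : gq gb * gq gc * gq gd = 1 := by
  rw [← map_mul, ← map_mul]; exact gq_rel (by simp [Rinf])
theorem gad : (gq ga * gq gd) ^ 4 = 1 := by
  rw [← map_mul, ← map_pow]
  exact gq_rel (Or.inl (Or.inr ⟨0, rfl⟩))

/-- Evaluation of positive words. -/
def ev (l : List L4) : F4 := (l.map FreeGroup.of).prod

@[simp] theorem ev_nil : ev [] = 1 := rfl
@[simp] theorem ev_cons (y : L4) (l : List L4) : ev (y :: l) = FreeGroup.of y * ev l := by simp [ev]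
@[simp] theorem ev_append (l l' : List L4) : ev (l ++ l') = ev l * ev l' := by simp [ev]

/-- Sections of the letters; `false` is the left coordinate, `true` the right one. -/
def sec : Bool → L4 → List L4
  | _, L4.a => []
  | false, L4.b => [L4.a]
  | false, L4.c => [L4.a]
  | false, L4.d => []
  | true, L4.b => [L4.c]
  | true, L4.c => [L4.d]
  | true, L4.d => [L4.b]

theorem sec_length (e : Bool) (y : L4) : (sec e y).length ≤ 1 := by
  cases e <;> cases y <;> simp [sec]

/-- wreath-type action -/
def act : F4 →* Equiv.Perm (Bool × (F4 ⧸ NI)) :=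
  FreeGroup.lift fun y => match y with
    | L4.a => ⟨fun p => (!p.1, p.2), fun p => (!p.1, p.2), fun p => by simp, fun p => by simp⟩
    | y => ⟨fun p => (p.1, gq (ev (sec p.1 y)) * p.2), fun p => (p.1, (gq (ev (sec p.1 y)))⁻¹ * p.2),
        fun p => by simp, fun p => by simp⟩

theorem act_a (e : Bool) (g : F4 ⧸ NI) : act ga (e, g) = (!e, g) := by
  simp [act, ga]

theorem act_y {y : L4} (hy : y ≠ L4.a) (e : Bool) (g : F4 ⧸ NI) :
    act (FreeGroup.of y) (e, g) = (e, gq (ev (sec e y)) * g) := by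
  cases y
  · exact absurd rfl hy
  all_goals simp [act]

theorem act_b0 (g : F4 ⧸ NI) : act gb (false, g) = (false, gq ga * g) := by
  simpa [sec, ga, gb, gc, gd] using act_y (y := L4.b) (by simp) false g
theorem act_b1 (g : F4 ⧸ NI) : act gb (true, g) = (true, gq gc * g) := by
  simpa [sec, ga, gb, gc, gd] using act_y (y := L4.b) (by simp) true g
theorem act_c0 (g : F4 ⧸ NI) : act gc (false, g) = (false, gq ga * g) := by
  simpa [sec, ga, gb, gc, gd] using act_y (y := L4.c) (by simp) false g
theorem act_c1 (g : F4 ⧸ NI) : act gc (true, g) = (true, gq gd * g) := by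
  simpa [sec, ga, gb, gc, gd] using act_y (y := L4.c) (by simp) true g
theorem act_d0 (g : F4 ⧸ NI) : act gd (false, g) = (false, g) := by
  simpa [sec, gd] using act_y (y := L4.d) (by simp) false g
theorem act_d1 (g : F4 ⧸ NI) : act gd (true, g) = (true, gq gb * g) := by
  simpa [sec, ga, gb, gc, gd] using act_y (y := L4.d) (by simp) true g

/-- The left coordinate of `sigma`. -/
def phi : F4 →* F4 :=
  FreeGroup.lift fun x => match x with
    | L4.a => gd
    | L4.b => 1
    | L4.c => ga
    | L4.d => ga

theorem phi_pow (w : F4) : gq (phi w) ^ 4 = 1 := by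
  refine dihedral_pow gaa gdd gad (gq.comp phi) ?_ w
  intro y
  cases y <;> simp [phi]

theorem act_sigma (w : F4) : (∀ g, act (sigma w) (true, g) = (true, gq w * g)) ∧
    ∀ g, act (sigma w) (false, g) = (false, gq (phi w) * g) := by
  have hgen : ∀ y, (∀ g, act (sigma (FreeGroup.of y)) (true, g) = (true, gq (FreeGroup.of y) * g)) ∧
      ∀ g, act (sigma (FreeGroup.of y)) (false, g) = (false, gq (phi (FreeGroup.of y)) * g) := by
    intro y
    cases y
    · change (∀ g, act (sigma ga) _ = (_, gq ga * _)) ∧ ∀ g, act (sigma ga) _ = _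
      simp [act_a, act_c0, act_c1, phi, Equiv.Perm.mul_apply]
    · change (∀ g, act (sigma gb) _ = (_, gq gb * _)) ∧ ∀ g, act (sigma gb) _ = _
      simp [act_d0, act_d1, phi]
    · change (∀ g, act (sigma gc) _ = (_, gq gc * _)) ∧ ∀ g, act (sigma gc) _ = _
      simp [act_b0, act_b1, phi]
    · change (∀ g, act (sigma gd) _ = (_, gq gd * _)) ∧ ∀ g, act (sigma gd) _ = _
      simp [act_c0, act_c1, phi]
  induction w using FreeGroup.induction_on with
  | C1 => simp
  | of y => exact hgen y
  | inv_of y h =>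
    obtain ⟨h1, h0⟩ := h
    constructor <;> intro g <;> rw [map_inv, map_inv, Equiv.Perm.inv_eq_iff_eq]
    · simp [h1]
    · simp [h0]
  | mul u v hu hv =>
    constructor <;> intro g <;> simp [Equiv.Perm.mul_apply, hu.1, hv.1, hu.2, hv.2, mul_assoc]

theorem act_rel {R : F4} (hR : R ∈ Rinf) : act R = 1 := by
  have key : ∀ (i : ℕ) (w : F4), (⇑sigma)^[i] (w ^ 4) ∈ Rinf → act ((⇑sigma)^[i + 1] (w ^ 4)) = 1 := by
    intro i w h
    rw [Function.iterate_succ_apply']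
    have h4 : phi ((⇑sigma)^[i] (w ^ 4)) = phi ((⇑sigma)^[i] w) ^ 4 := by
      rw [← map_pow]; congr 1
      exact iterate_map_pow sigma i w 4
    ext1 ⟨e, g⟩
    cases e
    · rw [(act_sigma _).2, h4, map_pow, phi_pow]; simp
    · rw [(act_sigma _).1, gq_rel h]; simp
  have hm : ∀ u v : F4 ⧸ NI, u * u = 1 → u * (u * v) = v := by
    intro u v h; rw [← mul_assoc, h, one_mul]
  have hb := gbcd
  rcases hR with (hR | ⟨i, rfl⟩) | ⟨i, rfl⟩
  · simp only [Set.mem_insert_iff, Set.mem_singleton_iff] at hR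
    rcases hR with h | h | h | h | h <;> subst h <;> ext1 ⟨e, g⟩ <;> cases e <;>
      simp [sq, Equiv.Perm.mul_apply, act_a, act_b0, act_b1, act_c0, act_c1, act_d0, act_d1, hm, gaa, gbb, gcc, gdd]
    have : gq gc * (gq gd * gq gb) = 1 := by
      have h3 : gq gb * (gq gc * gq gd) = 1 := by rw [← mul_assoc]; exact hb
      rw [← mul_assoc]
      exact mul_eq_one_comm.1 h3
    rw [← mul_assoc (gq gd), ← mul_assoc, this, one_mul]
  · rcases i with _ | i
    · ext1 ⟨e, g⟩
      cases e <;>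
      simp [pow_succ, Equiv.Perm.mul_apply, act_a, act_d0, act_d1, hm, gbb]
    · exact key i _ (Or.inl (Or.inr ⟨i, rfl⟩))
  · rcases i with _ | i
    · ext1 ⟨e, g⟩
      have h4 := gad
      cases e <;>
      simp [pow_succ, Equiv.Perm.mul_apply, act_a, act_d0, act_d1, act_c0, act_c1, hm, gbb, gdd, gaa]
    · exact key i _ (Or.inr ⟨i, rfl⟩)

theorem act_NI {W : F4} (hW : W ∈ NI) : act W = 1 := by
  have : NI ≤ act.ker := Subgroup.normalClosure_le_normal (fun R hR => act_rel hR)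
  exact this hW

theorem letter_not_mem (y : L4) : FreeGroup.of y ∉ NI := by
  have ha : ga ∉ NI := by
    intro h
    have := act_a true 1
    rw [act_NI h] at this
    simp at this
  have hb : gb ∉ NI := by
    intro h
    have := act_b0 1
    rw [act_NI h] at this
    simp only [Equiv.Perm.coe_one, id_eq, mul_one, Prod.mk.injEq, true_and] at this
    exact ha (gq_one.1 this.symm)
  cases y
  · exact ha
  · exact hb
  · intro h
    have := act_c0 1
    rw [show FreeGroup.of L4.c = gc from rfl] at h
    rw [act_NI h] at this
    simp only [Equiv.Perm.coe_one, id_eq, mul_one, Prod.mk.injEq, true_and] at this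
    exact ha (gq_one.1 this.symm)
  · intro h
    have := act_d1 1
    rw [show FreeGroup.of L4.d = gd from rfl] at h
    rw [act_NI h] at this
    simp only [Equiv.Perm.coe_one, id_eq, mul_one, Prod.mk.injEq, true_and] at this
    exact hb (gq_one.1 this.symm)

theorem Cost.mem {K : ℕ} {u : F4} (h : Cost K u) : u ∈ NI := by
  obtain ⟨m, h, -, -, h2⟩ := h
  induction h with
  | one => exact one_mem _
  | @step n W X R e i h hR he ih =>
    have hn : ∀ i, n (i + 2) = 0 := fun j => by
      have := h2 j
      simp at this
      omega
    refine mul_mem ?_ (ih hn)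
    refine (inferInstance : NI.Normal).conj_mem _ (zpow_mem ?_ _) _
    rcases i with _ | _ | i
    · simp only [ShStar, Set.mem_insert_iff, Set.mem_singleton_iff] at hR
      apply Subgroup.subset_normalClosure
      rcases hR with h | h | h | h | h | h | h <;> subst h
      any_goals simp [Rinf]; done
      · exact Or.inl (Or.inr ⟨0, rfl⟩)
      · exact Or.inr ⟨0, rfl⟩
    · simp only [ShStar, Set.mem_insert_iff, Set.mem_singleton_iff] at hR
      rcases hR with h | h | h <;> subst h
      · exact Subgroup.subset_normalClosure (Or.inl (Or.inr ⟨1, rfl⟩))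
      · exact Subgroup.subset_normalClosure (Or.inr ⟨1, rfl⟩)
      · rw [← gq_one]
        have hm : ∀ u v : F4 ⧸ NI, u * u = 1 → u * (u * v) = v := by
          intro u v h; rw [← mul_assoc, h, one_mul]
        simp [sq, mul_assoc, hm, gaa, gcc]
    · have := h2 i
      simp at this

theorem Near.mem {K : ℕ} {u v : F4} (h : Near K u v) (hu : u ∈ NI) : v ∈ NI := by
  have := Cost.mem h.symm
  simpa using mul_mem this hu
/-! ### Commutation in the quotient -/

theorem comm_of_invol {G : Type*} [Group G] {x y : G} (hx : x * x = 1) (hy : y * y = 1)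
    (hxy : (x * y) * (x * y) = 1) : x * y = y * x := by
  have hx' : x⁻¹ = x := inv_eq_of_mul_eq_one_left hx
  have hy' : y⁻¹ = y := inv_eq_of_mul_eq_one_left hy
  have := inv_eq_of_mul_eq_one_left hxy
  rw [← this]; simp [hx', hy']

theorem comm_good {G : Type*} [Group G] {A B C D : G} (hA : A * A = 1) (hB : B * B = 1)
    (hC : C * C = 1) (hD : D * D = 1) (hBCD : B * C * D = 1) (h4 : (A * D) ^ 4 = 1)
    (h12 : (A * D * A * C * A * C) ^ 4 = 1) (h8 : (C * (A * C * A)) ^ 4 = 1) (k : Fin 4) (g : G)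
    (hg : g = (C * (A * C * A)) ^ (k : ℕ) ∨ g = (C * (A * C * A)) ^ (k : ℕ) * C) :
    Commute (A * D * A) (g⁻¹ * D * g) := by
  have hA' : A⁻¹ = A := inv_eq_of_mul_eq_one_left hA
  have hC' : C⁻¹ = C := inv_eq_of_mul_eq_one_left hC
  have hm : ∀ u v : G, u * u = 1 → u * (u * v) = v := by
    intro u v h; rw [← mul_assoc, h, one_mul]
  have hCD : C * D = D * C := by
    apply comm_of_invol hC hD
    have : C * D = B := by
      calc C * D = B * (B * (C * D)) := (hm _ _ hB).symm
        _ = B * (B * C * D) := by rw [mul_assoc B C D]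
        _ = B := by rw [hBCD, mul_one]
    rw [this, hB]
  have heC : (A * D * A) * (A * C * A) = (A * C * A) * (A * D * A) := by
    simp only [mul_assoc, hm _ _ hA]
    rw [← mul_assoc D, ← hCD]
    simp only [mul_assoc]
  have het : Commute (A * D * A) (A * C * A) := heC
  have b1 : Commute (A * D * A) ((1 : G)⁻¹ * D * 1) := by
    simp only [inv_one, one_mul, mul_one]
    apply comm_of_invol _ hD
    · rw [← h4]; simp only [pow_succ, pow_zero, one_mul, mul_assoc]
    · simp only [mul_assoc, hm _ _ hA, hm _ _ hD, hA]
  have lft : ∀ g, Commute (A * D * A) (g⁻¹ * D * g) → Commute (A * D * A) ((C * g)⁻¹ * D * (C * g)) := by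
    intro g h
    have : (C * g)⁻¹ * D * (C * g) = g⁻¹ * D * g := by
      rw [mul_inv_rev, hC']
      simp only [mul_assoc]
      rw [← mul_assoc D C, ← hCD, mul_assoc, hm _ _ hC]
    rwa [this]
  have rgt : ∀ g, Commute (A * D * A) (g⁻¹ * D * g) →
      Commute (A * D * A) ((g * (A * C * A))⁻¹ * D * (g * (A * C * A))) := by
    intro g h
    have := (het.inv_right.mul_right h).mul_right het
    have e : (g * (A * C * A))⁻¹ * D * (g * (A * C * A)) =
        (A * C * A)⁻¹ * (g⁻¹ * D * g) * (A * C * A) := by group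
    rw [e]; exact this
  have b2 : Commute (A * D * A) (((A * C * A) * C)⁻¹ * D * ((A * C * A) * C)) := by
    apply comm_of_invol
    · simp only [mul_assoc, hm _ _ hA, hm _ _ hD, hA]
    · simp only [mul_inv_rev, hA', hC', mul_assoc, hm _ _ hA, hm _ _ hC, hm _ _ hD, hC]
    · rw [← h12]; simp only [pow_succ, pow_zero, one_mul, mul_assoc, mul_inv_rev, hA', hC']
  have h3 : (C * (A * C * A)) ^ 3 = (A * C * A) * C := by
    have h3 : (C * (A * C * A)) ^ 3 = (C * (A * C * A))⁻¹ := by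
      apply eq_inv_of_mul_eq_one_left
      rw [← pow_succ, h8]
    rw [h3]; simp only [mul_inv_rev, hA', hC', mul_assoc]
  have htt : (A * C * A) * (A * C * A) = 1 := by
    simp only [mul_assoc, hm _ _ hA, hm _ _ hC, hA]
  have h2 : (C * (A * C * A)) ^ 2 * C = (A * C * A) * C * (A * C * A) := by
    have : (C * (A * C * A)) ^ 2 = (C * (A * C * A)) ^ 3 * (C * (A * C * A))⁻¹ := by
      rw [pow_succ _ 2]; simp only [mul_inv_cancel_right]
    rw [this, h3]
    simp only [mul_inv_rev, hA', hC', mul_assoc, hC, mul_one]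
  have p0 := b1
  have p1 := rgt _ (lft _ b1)
  have p2 := rgt _ (lft _ b2)
  have q0 := lft _ b1
  have q1 := lft _ b2
  have q2 := rgt _ b2
  have q3 := rgt _ b1
  fin_cases k
  · rcases hg with rfl | rfl
    · simpa using p0
    · simpa using q0
  · rcases hg with rfl | rfl
    · simpa [mul_assoc] using p1
    · simpa [mul_assoc] using q1
  · rcases hg with rfl | rfl
    · simpa [mul_assoc, sq] using p2
    · simp only []
      rw [h2]; exact q2
  · rcases hg with rfl | rfl
    · simp only []
      rw [h3]; exact b2
    · simp only []
      rw [h3, mul_assoc _ C C, hC, mul_one]; simpa using q3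

/-- `alpha w = a sigma(w) a⁻¹`. -/
def alpha : F4 →* F4 := (MulAut.conj ga).toMonoidHom.comp sigma

theorem alpha_apply (w : F4) : alpha w = ga * sigma w * ga⁻¹ := by simp [alpha]

/-- killing `b` and identifying `c` with `d` -/
def ph : F4 →* F4 :=
  FreeGroup.lift fun x => match x with
    | L4.a => ga
    | L4.b => 1
    | L4.c => gd
    | L4.d => gd

theorem qinv {u : F4 ⧸ N01} (h : u * u = 1) : u⁻¹ = u := inv_eq_of_mul_eq_one_left h

theorem qm (u v : F4 ⧸ N01) (h : u * u = 1) : u * (u * v) = v := by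
  rw [← mul_assoc, h, one_mul]

theorem qal_a : qq (alpha ga) = qq gc := by
  simp [alpha_apply, mul_assoc, qm _ _ qaa]
theorem qal_b : qq (alpha gb) = qq ga * qq gd * qq ga := by
  simp [alpha_apply, qinv qaa]
theorem qal_c : qq (alpha gc) = qq ga * qq gb * qq ga := by
  simp [alpha_apply, qinv qaa]
theorem qal_d : qq (alpha gd) = qq ga * qq gc * qq ga := by
  simp [alpha_apply, qinv qaa]

theorem ph_a : ph ga = ga := by simp [ph, ga]
theorem ph_b : ph gb = 1 := by simp [ph, gb]
theorem ph_c : ph gc = gd := by simp [ph, gc]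
theorem ph_d : ph gd = gd := by simp [ph, gd]

/-- the finite (dihedral) monodromy -/
def mon : F4 →* F4 ⧸ N01 := qq.comp (alpha.comp ph)

theorem mon_apply (w : F4) : mon w = qq (alpha (ph w)) := rfl

theorem mon_gen (y : L4) : mon (FreeGroup.of y) = 1 ∨ mon (FreeGroup.of y) = qq gc ∨
    mon (FreeGroup.of y) = qq ga * qq gc * qq ga := by
  cases y
  · change mon ga = 1 ∨ mon ga = _ ∨ mon ga = _
    rw [mon_apply, ph_a, qal_a]; simp
  · change mon gb = 1 ∨ mon gb = _ ∨ mon gb = _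
    rw [mon_apply, ph_b]; simp
  · change mon gc = 1 ∨ mon gc = _ ∨ mon gc = _
    rw [mon_apply, ph_c, qal_d]; simp
  · change mon gd = 1 ∨ mon gd = _ ∨ mon gd = _
    rw [mon_apply, ph_d, qal_d]; simp

theorem qtt : (qq ga * qq gc * qq ga) * (qq ga * qq gc * qq ga) = 1 := by
  simp only [mul_assoc, qm _ _ qaa, qm _ _ qcc, qaa]

theorem qst : (qq gc * (qq ga * qq gc * qq ga)) ^ 4 = 1 := by
  have h : (qq gc * (qq ga * qq gc * qq ga)) = (qq ga * qq gc * qq ga * qq gc)⁻¹ := by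
    simp only [mul_inv_rev, qinv qaa, qinv qcc, mul_assoc]
  rw [h, inv_pow, qacac, inv_one]

theorem mon_form (w : F4) : ∃ k : Fin 4, mon w = (qq gc * (qq ga * qq gc * qq ga)) ^ (k : ℕ) ∨
    mon w = (qq gc * (qq ga * qq gc * qq ga)) ^ (k : ℕ) * qq gc :=
  dihedral_fin qcc qtt qst mon mon_gen w

theorem mon_pow (w : F4) : mon w ^ 4 = 1 := dihedral_pow qcc qtt qst mon mon_gen w

theorem mon_comm (w : F4) : Commute (qq ga * qq gd * qq ga) ((mon w)⁻¹ * qq gd * mon w) := by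
  obtain ⟨k, h⟩ := mon_form w
  exact comm_good qaa qbb qcc qdd qbcd qad qadacac qst k _ h

theorem mon_finite : (Set.range mon).Finite := by
  refine Set.Finite.subset (Set.finite_range (fun p : Fin 4 × Bool =>
    (qq gc * (qq ga * qq gc * qq ga)) ^ (p.1 : ℕ) * (if p.2 then qq gc else 1))) ?_
  rintro _ ⟨w, rfl⟩
  obtain ⟨k, h | h⟩ := mon_form w
  · exact ⟨(k, false), by simp [h]⟩
  · exact ⟨(k, true), by simp [h]⟩

theorem mon_NI {W : F4} (hW : W ∈ NI) : mon W = 1 := by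
  have h4 : ∀ (i : ℕ) (w : F4), mon ((⇑sigma)^[i] (w ^ 4)) = 1 := by
    intro i w
    have : (⇑sigma)^[i] (w ^ 4) = ((⇑sigma)^[i] w) ^ 4 := iterate_map_pow sigma i w 4
    rw [this, map_pow, mon_pow]
  have : NI ≤ mon.ker := by
    apply Subgroup.normalClosure_le_normal
    intro R hR
    change mon R = 1
    rcases hR with (hR | ⟨i, rfl⟩) | ⟨i, rfl⟩
    · simp only [Set.mem_insert_iff, Set.mem_singleton_iff] at hR
      rcases hR with h | h | h | h | h <;> subst h <;>
        simp [sq, mon_apply, ph_a, ph_b, ph_c, ph_d, qal_a, qal_d, qcc, qtt]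
    · exact h4 i _
    · exact h4 i _
  exact this hW

/-- The finite set of values of the monodromy. -/
abbrev MonT := Set.range mon

instance : Finite MonT := mon_finite

noncomputable def outF (g : F4 ⧸ N01) : F4 := Quotient.out g

theorem qq_outF (g : F4 ⧸ N01) : qq (outF g) = g := by
  simp [qq, outF]

instance : Finite L4 := by
  apply Finite.of_surjective (fun i : Fin 4 => match i with
    | 0 => L4.a | 1 => L4.b | 2 => L4.c | 3 => L4.d)
  rintro (_ | _ | _ | _)
  · exact ⟨0, rfl⟩
  · exact ⟨1, rfl⟩
  · exact ⟨2, rfl⟩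
  · exact ⟨3, rfl⟩

theorem mon_step : ∃ K, ∀ w : List L4, Near (K * (w.length + 1)) (alpha (ph (ev w))) (outF (mon (ev w))) := by
  obtain ⟨K, hK⟩ := near_fin (ι := MonT × L4)
    (fun p => outF p.1 * alpha (ph (FreeGroup.of p.2))) (fun p => outF (p.1 * mon (FreeGroup.of p.2)))
    (fun p => by simp [qq_outF, mon_apply])
  obtain ⟨K0, hK0⟩ := qq_eq.1 (show qq 1 = qq (outF 1) by simp [qq_outF])
  refine ⟨K + K0, fun w => ?_⟩
  induction w using List.reverseRecOn with
  | nil => simpa using hK0.mono (by omega)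
  | append_singleton w y ih =>
    have h1 := ih.mul_right (alpha (ph (FreeGroup.of y)))
    have h2 := h1.trans (hK (⟨mon (ev w), ⟨_, rfl⟩⟩, y))
    simp only [ev_append, ev_cons, ev_nil, mul_one, map_mul, List.length_append, List.length_singleton]
    refine h2.mono ?_
    nlinarith

theorem mon_trivial : ∃ K, ∀ w : List L4, ev w ∈ NI → Near (K * (w.length + 1)) (alpha (ph (ev w))) 1 := by
  obtain ⟨K, hK⟩ := mon_step
  obtain ⟨K0, hK0⟩ := qq_eq.1 (show qq (outF 1) = qq 1 by simp [qq_outF])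
  refine ⟨K + K0, fun w hw => ?_⟩
  have := hK w
  rw [mon_NI hw] at this
  refine (this.trans hK0).mono ?_
  nlinarith [Nat.zero_le (K0 * w.length)]

theorem conj_step : ∃ K, ∀ (u : F4) (w : List L4), Near (K * w.length)
    ((alpha (ev w))⁻¹ * ((outF (mon u))⁻¹ * gd * outF (mon u)) * alpha (ev w))
    ((outF (mon (u * ev w)))⁻¹ * gd * outF (mon (u * ev w))) := by
  have key : ∀ w y, (qq (alpha (FreeGroup.of y)))⁻¹ * ((mon w)⁻¹ * qq gd * mon w) * qq (alpha (FreeGroup.of y)) =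
      (mon w * mon (FreeGroup.of y))⁻¹ * qq gd * (mon w * mon (FreeGroup.of y)) := by
    intro w y
    have hc := mon_comm w
    have hc' : (qq ga * qq gd * qq ga)⁻¹ * ((mon w)⁻¹ * qq gd * mon w) * (qq ga * qq gd * qq ga) =
        (mon w)⁻¹ * qq gd * mon w := by
      rw [mul_assoc, ← hc.eq, inv_mul_cancel_left]
    cases y
    · change (qq (alpha ga))⁻¹ * _ * qq (alpha ga) = (_ * mon ga)⁻¹ * _ * (_ * mon ga)
      rw [mon_apply ga, ph_a]; group
    · change (qq (alpha gb))⁻¹ * _ * qq (alpha gb) = (_ * mon gb)⁻¹ * _ * (_ * mon gb)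
      rw [mon_apply gb, ph_b, qal_b, hc']; simp
    · change (qq (alpha gc))⁻¹ * _ * qq (alpha gc) = (_ * mon gc)⁻¹ * _ * (_ * mon gc)
      have hbc : qq gb = qq gd * qq gc := by
        have h : qq gb * (qq gc * qq gd) = 1 := by rw [← mul_assoc]; exact qbcd
        rw [eq_inv_of_mul_eq_one_left h, mul_inv_rev, qinv qcc, qinv qdd]
      have : qq (alpha gc) = (qq ga * qq gd * qq ga) * qq (alpha gd) := by
        rw [qal_c, qal_d, hbc]
        simp only [mul_assoc, qm _ _ qaa]
      rw [mon_apply gc, ph_c, this]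
      calc _ = (qq (alpha gd))⁻¹ * ((qq ga * qq gd * qq ga)⁻¹ * ((mon w)⁻¹ * qq gd * mon w) * (qq ga * qq gd * qq ga)) * qq (alpha gd) := by group
        _ = _ := by rw [hc']; group
    · change (qq (alpha gd))⁻¹ * _ * qq (alpha gd) = (_ * mon gd)⁻¹ * _ * (_ * mon gd)
      rw [mon_apply gd, ph_d]; group
  obtain ⟨K, hK⟩ := near_fin (ι := MonT × L4)
    (fun p => (alpha (FreeGroup.of p.2))⁻¹ * ((outF p.1)⁻¹ * gd * outF p.1) * alpha (FreeGroup.of p.2))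
    (fun p => (outF (p.1 * mon (FreeGroup.of p.2)))⁻¹ * gd * outF (p.1 * mon (FreeGroup.of p.2)))
    (fun p => by
      obtain ⟨⟨_, w, rfl⟩, y⟩ := p
      simpa [qq_outF] using key w y)
  refine ⟨K, fun u w => ?_⟩
  induction w using List.reverseRecOn with
  | nil => simpa using Near.rfl
  | append_singleton w y ih =>
    have h1 := (ih.mul_left (alpha (FreeGroup.of y))⁻¹).mul_right (alpha (FreeGroup.of y))
    have h2 := h1.trans (hK (⟨mon (u * ev w), ⟨_, rfl⟩⟩, y))
    simp only [ev_append, ev_cons, ev_nil, mul_one, map_mul, List.length_append, List.length_singleton] at h2 ⊢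
    have h3 := h2.mono (K' := K * (w.length + 1)) (by nlinarith)
    convert h3 using 1
    · group
    · simp only [mul_assoc]

/-- The element commuting with `d`. -/
def zz (w : List L4) : F4 := (alpha (ph (ev w)))⁻¹ * alpha (ev w)

theorem zz_comm : ∃ K, ∀ w : List L4, Near (K * (w.length + 1)) (zz w * gd) (gd * zz w) := by
  obtain ⟨K, hK⟩ := mon_step
  obtain ⟨K', hK'⟩ := conj_step
  obtain ⟨K1, hK1⟩ := near_fin (ι := MonT) (fun p => (outF p.1)⁻¹) (fun p => outF (p.1)⁻¹)
    (fun p => by simp [qq_outF])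
  obtain ⟨K0, hK0⟩ := qq_eq.1 (show qq ((outF 1)⁻¹ * gd * outF 1) = qq gd by simp [qq_outF])
  refine ⟨2 * K + 2 * K1 + K' + K0, fun w => ?_⟩
  have h1 := (hK w).inv.trans (hK1 ⟨mon (ev w), ⟨_, rfl⟩⟩)
  have h2 := hK' (ev w)⁻¹ w
  simp only [inv_mul_cancel, map_one] at h2
  have h2 := h2.trans hK0
  rw [map_inv] at h2
  have h3 := (h1.inv.mul_right gd).mul h1
  have h4 := (h3.mul_left (alpha (ev w))⁻¹).mul_right (alpha (ev w))
  have h5 := (h4.trans h2).mul_left (zz w)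
  have h6 := h5.symm.mono (K' := (2 * K + 2 * K1 + K' + K0) * (w.length + 1)) (by nlinarith)
  convert h6 using 1
  unfold zz
  group
/-! ### The quadratic estimate -/

def hl (p : Bool × L4) : F4 := if p.1 then ga * FreeGroup.of p.2 * ga else FreeGroup.of p.2

def HW (l : List (Bool × L4)) : F4 := (l.map hl).prod

def gsec (e : Bool) (l : List (Bool × L4)) : List L4 := l.flatMap fun p => sec (e ^^ p.1) p.2

theorem gsec_length (e : Bool) (l : List (Bool × L4)) : (gsec e l).length ≤ l.length := by
  induction l with
  | nil => simp [gsec]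
  | cons p l ih =>
    have := sec_length (e ^^ p.1) p.2
    simp only [gsec, List.flatMap_cons, List.length_append, List.length_cons] at ih ⊢
    omega

theorem act_HW (l : List (Bool × L4)) (hl' : ∀ p ∈ l, p.2 ≠ L4.a) (e : Bool) (g : F4 ⧸ NI) :
    act (HW l) (e, g) = (e, gq (ev (gsec e l)) * g) := by
  induction l with
  | nil => simp [HW, gsec]
  | cons p l ih =>
    have ih := ih (fun p hp => hl' p (by simp [hp]))
    have hp := hl' p (by simp)
    obtain ⟨e', y⟩ := p
    simp only at hp
    have : HW ((e', y) :: l) = hl (e', y) * HW l := by simp [HW]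
    rw [this, map_mul, Equiv.Perm.mul_apply, ih]
    cases e' <;> simp [hl, gsec, act_y hp, act_a, Equiv.Perm.mul_apply, mul_assoc]

def dl (p : Bool × L4) : F4 :=
  match p with
  | (false, L4.b) => gd
  | (false, L4.d) => gd
  | _ => 1

theorem qb_eq : qq gb = qq gd * qq gc := by
  have h : qq gb * (qq gc * qq gd) = 1 := by rw [← mul_assoc]; exact qbcd
  rw [eq_inv_of_mul_eq_one_left h, mul_inv_rev, qinv qcc, qinv qdd]

theorem step_A (p : Bool × L4) (hp : p.2 ≠ L4.a) :
    qq (dl p) = qq (sigma (ev (sec (true ^^ p.1) p.2)) * (alpha (ph (ev (sec (false ^^ p.1) p.2))))⁻¹) := by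
  have ea : FreeGroup.of L4.a = ga := rfl
  have eb : FreeGroup.of L4.b = gb := rfl
  have ec : FreeGroup.of L4.c = gc := rfl
  have ed : FreeGroup.of L4.d = gd := rfl
  obtain ⟨e, y⟩ := p
  cases e <;> cases y <;>
    simp [dl, sec, ea, eb, ec, ed, ph_a, ph_b, ph_c, ph_d, qal_a, qal_d, qb_eq] at hp ⊢

theorem step_B (p : Bool × L4) (hp : p.2 ≠ L4.a) :
    qq (hl p) = qq (dl p * alpha (ev (sec (false ^^ p.1) p.2))) := by
  have ea : FreeGroup.of L4.a = ga := rfl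
  have eb : FreeGroup.of L4.b = gb := rfl
  have ec : FreeGroup.of L4.c = gc := rfl
  have ed : FreeGroup.of L4.d = gd := rfl
  obtain ⟨e, y⟩ := p
  cases e <;> cases y <;>
    simp [hl, dl, sec, ea, eb, ec, ed, qal_a, qal_b, qal_c, qal_d, qb_eq] at hp ⊢

theorem quad : ∃ K, ∀ l : List (Bool × L4), (∀ p ∈ l, p.2 ≠ L4.a) →
    Near (K * (l.length + 1) ^ 2) (HW l) (sigma (ev (gsec true l)) * zz (gsec false l)) := by
  obtain ⟨K, hK⟩ := zz_comm
  obtain ⟨KA, hKA⟩ := near_fin (ι := {p : Bool × L4 // p.2 ≠ L4.a}) _ _ (fun p => step_A p.1 p.2)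
  obtain ⟨KB, hKB⟩ := near_fin (ι := {p : Bool × L4 // p.2 ≠ L4.a}) _ _ (fun p => step_B p.1 p.2)
  refine ⟨K + KA + KB, fun l hl' => ?_⟩
  induction l using List.reverseRecOn with
  | nil => simpa [HW, gsec, zz] using Near.rfl.mono (Nat.zero_le _)
  | append_singleton l p ih =>
    have ih := ih (fun p hp => hl' p (by simp [hp]))
    have hp := hl' p (by simp)
    have hA := hKA ⟨p, hp⟩
    have hB := hKB ⟨p, hp⟩
    simp only at hA hB
    set s0 := sec (false ^^ p.1) p.2 with hs0
    set s1 := sec (true ^^ p.1) p.2 with hs1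
    have hz : Near (K * (l.length + 1)) (zz (gsec false l) * dl p) (dl p * zz (gsec false l)) := by
      have h0 : Near (K * (l.length + 1)) (zz (gsec false l) * 1) (1 * zz (gsec false l)) := by
        simpa using Near.rfl.mono (Nat.zero_le _)
      have h1 := (hK (gsec false l)).mono (K' := K * (l.length + 1))
        (Nat.mul_le_mul_left _ (by have := gsec_length false l; omega))
      unfold dl
      split <;> assumption
    have e1 : HW (l ++ [p]) = HW l * hl p := by simp [HW]
    have e2 : sigma (ev (gsec true (l ++ [p]))) * zz (gsec false (l ++ [p])) =
        sigma (ev (gsec true l)) * ((sigma (ev s1) * (alpha (ph (ev s0)))⁻¹) * zz (gsec false l)) *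
          alpha (ev s0) := by
      simp only [gsec, List.flatMap_append, List.flatMap_cons, List.flatMap_nil, List.append_nil,
        ev_append, map_mul, zz, mul_inv_rev, ← hs0, ← hs1, mul_assoc]
    rw [e1, e2]
    have t1 := ih.mul hB
    have t2 := (hz.trans (hA.mul_right (zz (gsec false l))))
    have t3 := (t2.mul_left (sigma (ev (gsec true l)))).mul_right (alpha (ev s0))
    have t4 : Near (K * (l.length + 1) + KA)
        (sigma (ev (gsec true l)) * zz (gsec false l) * (dl p * alpha (ev s0)))
        (sigma (ev (gsec true l)) * ((sigma (ev s1) * (alpha (ph (ev s0)))⁻¹) * zz (gsec false l)) *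
          alpha (ev s0)) := by
      convert t3 using 1
      simp only [mul_assoc]
    refine (t1.trans t4).mono ?_
    simp only [List.length_append, List.length_singleton]
    nlinarith [Nat.zero_le (K * l.length), Nat.zero_le (KA * l.length), Nat.zero_le (KB * l.length)]

def alt (ys : List L4) : List L4 := ys.flatMap fun y => [L4.a, y]

@[simp] theorem alt_nil : alt [] = [] := rfl
@[simp] theorem alt_cons (y : L4) (ys : List L4) : alt (y :: ys) = L4.a :: y :: alt ys := rfl
@[simp] theorem alt_append (ys zs : List L4) : alt (ys ++ zs) = alt ys ++ alt zs := by simp [alt]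
theorem alt_length (ys : List L4) : (alt ys).length = 2 * ys.length := by
  induction ys with
  | nil => rfl
  | cons y ys ih => simp [ih]; omega

def pu : Bool → List L4 → List (Bool × L4)
  | _, [] => []
  | e, y :: ys => (e, y) :: pu (!e) ys

theorem pu_length (e : Bool) (ys : List L4) : (pu e ys).length = ys.length := by
  induction ys generalizing e with
  | nil => rfl
  | cons y ys ih => simp [pu, ih]

theorem pu_ne (e : Bool) (ys : List L4) (h : ∀ y ∈ ys, y ≠ L4.a) : ∀ p ∈ pu e ys, p.2 ≠ L4.a := by
  induction ys generalizing e with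
  | nil => simp [pu]
  | cons y ys ih =>
    simp only [pu, List.mem_cons]
    rintro p (rfl | hp)
    · exact h y (by simp)
    · exact ih (!e) (fun y hy => h y (by simp [hy])) p hp

theorem near_aa : Near 1 (ga * ga) 1 := by
  have := Cost.rel0 (R := ga ^ 2) (by simp [ShStar])
  rw [sq] at this
  simpa [Near] using this

theorem pu_near (e : Bool) (ys : List L4) : ∃ f : F4, (f = 1 ∨ f = ga) ∧
    Near ys.length ((if e then 1 else ga) * ev (alt ys)) (HW (pu e ys) * f) := by
  induction ys generalizing e with
  | nil =>
    refine ⟨if e then 1 else ga, by cases e <;> simp, ?_⟩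
    simpa [pu, HW] using Near.rfl
  | cons y ys ih =>
    obtain ⟨f, hf, h⟩ := ih (!e)
    refine ⟨f, hf, ?_⟩
    have e1 : HW (pu e (y :: ys)) * f = hl (e, y) * (HW (pu (!e) ys) * f) := by
      simp [HW, pu, mul_assoc]
    rw [e1]
    have h2 := h.mul_left (hl (e, y))
    refine (Near.trans (K := 1) ?_ h2).mono (by simp; omega)
    have ea : FreeGroup.of L4.a = ga := rfl
    cases e
    · have := near_aa.mul_right (FreeGroup.of y * ev (alt ys))
      simpa [hl, ea, mul_assoc] using this
    · have := (near_aa.symm.mul_left (ga * FreeGroup.of y)).mul_right (ev (alt ys))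
      simpa [hl, ea, mul_assoc] using this

theorem split : ∃ K, ∀ ys : List L4, (∀ y ∈ ys, y ≠ L4.a) → ev (alt ys) ∈ NI →
    ∃ w0 w1 : List L4, w0.length ≤ ys.length ∧ w1.length ≤ ys.length ∧ ev w0 ∈ NI ∧ ev w1 ∈ NI ∧
      Near (K * (ys.length + 1) ^ 2) (ev (alt ys)) (sigma (ev w1) * alpha (ev w0)) := by
  obtain ⟨K, hK⟩ := quad
  obtain ⟨K', hK'⟩ := mon_trivial
  refine ⟨K + K' + 1, fun ys hys hN => ?_⟩
  obtain ⟨f, hf, h⟩ := pu_near true ys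
  simp only [if_true, one_mul] at h
  have hne := pu_ne true ys hys
  have hmem := h.mem hN
  have hlen := pu_length true ys
  set l := pu true ys
  have hf1 : f = 1 := by
    rcases hf with h | h
    · exact h
    · exfalso
      subst h
      have := congrArg (fun s => (s (true, 1)).1) (act_NI hmem)
      simp [Equiv.Perm.mul_apply, act_a, act_HW l hne] at this
  subst hf1
  rw [mul_one] at h hmem
  have hsec : ∀ e, ev (gsec e l) ∈ NI := by
    intro e
    have := congrArg (fun s => (s (e, 1)).2) (act_NI hmem)
    simp [act_HW l hne] at this
    exact gq_one.1 this
  refine ⟨gsec false l, gsec true l, ?_, ?_, hsec _, hsec _, ?_⟩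
  · rw [← hlen]; exact gsec_length _ _
  · rw [← hlen]; exact gsec_length _ _
  · have h1 := h.trans (hK l hne)
    have h2 := ((hK' _ (hsec false)).inv.mul_right (alpha (ev (gsec false l)))).mul_left
      (sigma (ev (gsec true l)))
    rw [inv_one, one_mul] at h2
    have h3 := h1.trans h2
    refine h3.mono ?_
    have := gsec_length false l
    rw [hlen] at this ⊢
    have h5 : K' * ((gsec false l).length + 1) ≤ K' * (ys.length + 1) :=
      Nat.mul_le_mul_left _ (by omega)
    nlinarith [Nat.zero_le (K' * ys.length), Nat.zero_le (K' * ys.length ^ 2)]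

/-! ### Reduction to cyclically alternating words -/

theorem merge (p q : L4) (h : p = L4.a ↔ q = L4.a) :
    ∃ r : List L4, r.length ≤ 1 ∧ qq (FreeGroup.of p * FreeGroup.of q) = qq (ev r) := by
  have ea : FreeGroup.of L4.a = ga := rfl
  have eb : FreeGroup.of L4.b = gb := rfl
  have ec : FreeGroup.of L4.c = gc := rfl
  have ed : FreeGroup.of L4.d = gd := rfl
  have hcd : qq gc * qq gd = qq gb := by
    rw [← qinv qbb, qb_eq, mul_inv_rev, qinv qcc, qinv qdd]
  have hdc : qq gd * qq gc = qq gb := qb_eq.symm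
  have hdb : qq gd * qq gb = qq gc := by rw [← hdc, qm _ _ qdd]
  have hbd : qq gb * qq gd = qq gc := by rw [← hcd, mul_assoc, qdd, mul_one]
  have hcb : qq gc * qq gb = qq gd := by rw [← hcd, qm _ _ qcc]
  have hbc : qq gb * qq gc = qq gd := by rw [← hdc, mul_assoc, qcc, mul_one]
  cases p <;> cases q <;> simp only [ea, eb, ec, ed, map_mul] at h ⊢ <;> try (simp at h; done)
  · exact ⟨[], by simp, by simp [qaa]⟩
  · exact ⟨[], by simp, by simp [qbb]⟩
  · exact ⟨[L4.d], by simp, by simp [ed, hbc]⟩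
  · exact ⟨[L4.c], by simp, by simp [ec, hbd]⟩
  · exact ⟨[L4.d], by simp, by simp [ed, hcb]⟩
  · exact ⟨[], by simp, by simp [qcc]⟩
  · exact ⟨[L4.b], by simp, by simp [eb, hcd]⟩
  · exact ⟨[L4.c], by simp, by simp [ec, hdb]⟩
  · exact ⟨[L4.b], by simp, by simp [eb, hdc]⟩
  · exact ⟨[], by simp, by simp [qdd]⟩

theorem merge_K : ∃ K, ∀ p q : L4, (p = L4.a ↔ q = L4.a) →
    ∃ r : List L4, r.length ≤ 1 ∧ Near K (FreeGroup.of p * FreeGroup.of q) (ev r) := by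
  choose r hr hr' using merge
  obtain ⟨K, hK⟩ := near_fin (ι := {p : L4 × L4 // p.1 = L4.a ↔ p.2 = L4.a}) _ _
    (fun p => hr' p.1.1 p.1.2 p.2)
  exact ⟨K, fun p q h => ⟨_, hr p q h, hK ⟨(p, q), h⟩⟩⟩

theorem word_form (w : List L4) :
    (∃ u p q v, w = u ++ p :: q :: v ∧ (p = L4.a ↔ q = L4.a)) ∨
    ∃ ys : List L4, (∀ y ∈ ys, y ≠ L4.a) ∧ (w = alt ys ∨ w = alt ys ++ [L4.a] ∨
      ∃ y, y ≠ L4.a ∧ (w = y :: alt ys ∨ w = y :: alt ys ++ [L4.a])) := by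
  induction w with
  | nil => exact Or.inr ⟨[], by simp, Or.inl rfl⟩
  | cons p t ih =>
    rcases ih with ⟨u, p', q, v, rfl, h⟩ | ⟨ys, hys, h⟩
    · exact Or.inl ⟨p :: u, p', q, v, rfl, h⟩
    · by_cases hp : p = L4.a
      · subst hp
        rcases h with h | h | ⟨y, hy, h | h⟩
        · rcases ys with _ | ⟨y, ys⟩
          · exact Or.inr ⟨[], by simp, by simp [h]⟩
          · exact Or.inl ⟨[], L4.a, L4.a, y :: alt ys, by simp [h], by simp⟩
        · rcases ys with _ | ⟨y, ys⟩
          · exact Or.inl ⟨[], L4.a, L4.a, [], by simp [h], by simp⟩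
          · exact Or.inl ⟨[], L4.a, L4.a, y :: alt ys ++ [L4.a], by simp [h], by simp⟩
        · exact Or.inr ⟨y :: ys, by simpa [hy] using hys, Or.inl (by simp [h])⟩
        · exact Or.inr ⟨y :: ys, by simpa [hy] using hys, Or.inr (Or.inl (by simp [h]))⟩
      · rcases h with h | h | ⟨y, hy, h | h⟩
        · exact Or.inr ⟨ys, hys, Or.inr (Or.inr ⟨p, hp, by simp [h]⟩)⟩
        · exact Or.inr ⟨ys, hys, Or.inr (Or.inr ⟨p, hp, by simp [h]⟩)⟩
        · exact Or.inl ⟨[], p, y, alt ys, by simp [h], by simp [hp, hy]⟩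
        · exact Or.inl ⟨[], p, y, alt ys ++ [L4.a], by simp [h], by simp [hp, hy]⟩

theorem cyc_red : ∃ K, ∀ (n : ℕ) (w : List L4), w.length = n → ev w ∈ NI →
    ∃ (g : F4) (ys : List L4), (∀ y ∈ ys, y ≠ L4.a) ∧ 2 * ys.length ≤ n ∧
      Near (K * n) (g * ev w * g⁻¹) (ev (alt ys)) := by
  obtain ⟨K, hK⟩ := merge_K
  refine ⟨K, fun n => ?_⟩
  induction n using Nat.strong_induction_on with
  | _ n ih =>
    intro w hw hN
    -- reduction step
    have red : ∀ (g : F4) (w' : List L4), w'.length < n → Near K (g * ev w * g⁻¹) (ev w') →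
        ∃ (g : F4) (ys : List L4), (∀ y ∈ ys, y ≠ L4.a) ∧ 2 * ys.length ≤ n ∧
          Near (K * n) (g * ev w * g⁻¹) (ev (alt ys)) := by
      intro g w' hlt hnear
      have hN' : ev w' ∈ NI := hnear.mem ((inferInstance : NI.Normal).conj_mem _ hN g)
      obtain ⟨g', ys, hys, hl2, h2⟩ := ih _ hlt w' rfl hN'
      refine ⟨g' * g, ys, hys, by omega, ?_⟩
      have h3 := ((hnear.mul_left g').mul_right g'⁻¹).trans h2
      have h4 := h3.mono (K' := K * n) (by
        have : K * (w'.length + 1) ≤ K * n := Nat.mul_le_mul_left _ hlt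
        nlinarith)
      convert h4 using 1
      group
    rcases word_form w with ⟨u, p, q, v, h, hpq⟩ | ⟨ys, hys, h⟩
    · obtain ⟨r, hr, hr2⟩ := hK p q hpq
      refine red 1 (u ++ r ++ v) ?_ ?_
      · rw [← hw, h]; simp; omega
      · have := (hr2.mul_left (ev u)).mul_right (ev v)
        simpa [h, mul_assoc] using this
    · rcases h with h | h | ⟨y, hy, h | h⟩
      · refine ⟨1, ys, hys, ?_, ?_⟩
        · rw [← hw, h, alt_length]
        · simpa [h] using Near.rfl.mono (Nat.zero_le _)
      · rcases ys with _ | ⟨y, ys⟩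
        · rw [h] at hN
          simp at hN
          exact absurd hN (letter_not_mem _)
        · obtain ⟨r, hr, hr2⟩ := hK L4.a L4.a Iff.rfl
          refine red ga (r ++ y :: alt ys) ?_ ?_
          · rw [← hw, h]; simp; omega
          · have := hr2.mul_right (FreeGroup.of y * ev (alt ys))
            have ea : FreeGroup.of L4.a = ga := rfl
            simpa [h, ea, mul_assoc] using this
      · rcases List.eq_nil_or_concat ys with rfl | ⟨zs, z, rfl⟩
        · rw [h] at hN
          simp at hN
          exact absurd hN (letter_not_mem _)
        · have hz : z ≠ L4.a := hys z (by simp)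
          obtain ⟨r, hr, hr2⟩ := hK z y (by simp [hz, hy])
          refine red (FreeGroup.of y)⁻¹ (alt zs ++ L4.a :: r) ?_ ?_
          · rw [← hw, h]; simp; omega
          · have := hr2.mul_left (ev (alt zs) * FreeGroup.of L4.a)
            simpa [h, mul_assoc] using this
      · refine ⟨(FreeGroup.of y)⁻¹, ys ++ [y], ?_, ?_, ?_⟩
        · intro z hz
          simp only [List.mem_append, List.mem_singleton] at hz
          rcases hz with hz | rfl
          · exact hys z hz
          · exact hy
        · rw [← hw, h]; simp [alt_length]; omega
        · simpa [h, mul_assoc] using Near.rfl.mono (Nat.zero_le _)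

theorem near_inv_letter (y : L4) : Near 1 (FreeGroup.of y)⁻¹ (FreeGroup.of y) := by
  have h : Cost 1 ((FreeGroup.of y) ^ 2) := by
    apply Cost.rel0
    cases y <;> simp [ShStar, ga, gb, gc, gd]
  have := h.inv
  simpa [Near, sq] using this

theorem pos_word (W : F4) : ∃ w : List L4, w.length = FreeGroup.norm W ∧
    Near (FreeGroup.norm W) W (ev w) := by
  have key : ∀ l : List (L4 × Bool), Near l.length (FreeGroup.mk l) (ev (l.map Prod.fst)) := by
    intro l
    induction l with
    | nil => simpa [← FreeGroup.one_eq_mk] using Near.rfl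
    | cons p l ih =>
      have e1 : FreeGroup.mk (p :: l) = FreeGroup.mk [p] * FreeGroup.mk l := by
        rw [FreeGroup.mul_mk]; rfl
      rw [e1]
      have h1 : Near 1 (FreeGroup.mk [p]) (FreeGroup.of p.1) := by
        obtain ⟨y, e⟩ := p
        cases e
        · have : FreeGroup.mk [(y, false)] = (FreeGroup.of y)⁻¹ := by
            simp [FreeGroup.of, FreeGroup.invRev]
          rw [this]; exact near_inv_letter y
        · exact Near.rfl.mono (Nat.zero_le _)
      simpa using (h1.mul ih).mono (K' := (p :: l).length) (by simp only [List.length_cons]; omega)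
  refine ⟨W.toWord.map Prod.fst, by simp [FreeGroup.norm], ?_⟩
  have := key W.toWord
  rwa [FreeGroup.mk_toWord] at this
/-! ### The recursion -/

theorem norm_ev (w : List L4) : FreeGroup.norm (ev w) ≤ w.length := by
  induction w with
  | nil => simp
  | cons y w ih =>
    rw [ev_cons]
    have := FreeGroup.norm_mul_le (FreeGroup.of y) (ev w)
    rw [FreeGroup.norm_of] at this
    simp only [List.length_cons]; omega

theorem small_word {W : F4} (hW : W ∈ NI) (hn : FreeGroup.norm W ≤ 1) : W = 1 := by
  obtain ⟨w, hw, hnear⟩ := pos_word W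
  have hN := hnear.mem hW
  rcases w with _ | ⟨y, _ | ⟨z, w⟩⟩
  · simp at hw
    exact FreeGroup.norm_eq_zero.1 hw.symm
  · simp at hN
    exact absurd hN (letter_not_mem _)
  · simp at hw; omega

theorem main_rec : ∃ C : ℕ, ∀ x : ℕ, 1 ≤ x → ∀ W ∈ NI, FreeGroup.norm W ≤ x →
    ∃ m, HRep m W ∧ (∀ i, m i * 2 ^ (i - 1) ≤ C * x ^ 2) ∧ ∀ i, Nat.log 2 x < i → m i = 0 := by
  obtain ⟨K1, hK1⟩ := cyc_red
  obtain ⟨K2, hK2⟩ := split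
  refine ⟨2 * (1 + K1 + K2), fun x => ?_⟩
  induction x using Nat.strong_induction_on with
  | _ x ih =>
    intro hx W hW hn
    rcases Nat.lt_or_ge x 2 with hx2 | hx2
    · have : W = 1 := small_word hW (by omega)
      subst this
      exact ⟨0, HRep.one, by simp, by simp⟩
    obtain ⟨w, hw, h1⟩ := pos_word W
    have hN1 := h1.mem hW
    obtain ⟨g, ys, hys, hlen, h2⟩ := hK1 _ w rfl hN1
    have hN2 := h2.mem ((inferInstance : NI.Normal).conj_mem _ hN1 g)
    obtain ⟨w0, w1, hl0, hl1, hm0, hm1, h3⟩ := hK2 ys hys hN2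
    have h4 := (((h1.mul_left g).mul_right g⁻¹).trans h2).trans h3
    have h5 := h4.mono (K' := (1 + K1 + K2) * x ^ 2) (by
      have a1 : FreeGroup.norm W ≤ x ^ 2 := hn.trans (by nlinarith)
      have a2 : K1 * w.length ≤ K1 * x ^ 2 := Nat.mul_le_mul_left _ (by rw [hw]; exact a1)
      have a3 : K2 * (ys.length + 1) ^ 2 ≤ K2 * x ^ 2 :=
        Nat.mul_le_mul_left _ (Nat.pow_le_pow_left (by omega) 2)
      nlinarith)
    obtain ⟨mc, hmc, hc0, hc1, hc2⟩ := h5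
    have hx1 : 1 ≤ x / 2 := by omega
    have hlt : x / 2 < x := by omega
    obtain ⟨m0, r0, b0, z0⟩ := ih _ hlt hx1 (ev w0) hm0 ((norm_ev w0).trans (by omega))
    obtain ⟨m1, r1, b1, z1⟩ := ih _ hlt hx1 (ev w1) hm1 ((norm_ev w1).trans (by omega))
    obtain ⟨n0, s0, c00, c01, c02⟩ := r0.map_sigma
    obtain ⟨n1, s1, c10, c11, c12⟩ := r1.map_sigma
    have hrep := (hmc.mul (s1.mul (s0.conj ga))).conj g⁻¹
    have hsq : 4 * (x / 2) ^ 2 ≤ x ^ 2 := by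
      have : 2 * (x / 2) ≤ x := Nat.mul_div_le x 2
      nlinarith
    have hb0 := b0 0
    have hb1 := b1 0
    simp only [Nat.zero_sub, pow_zero, mul_one] at hb0 hb1
    set K := 1 + K1 + K2
    have hsq' : K * (4 * (x / 2) ^ 2) ≤ K * x ^ 2 := Nat.mul_le_mul_left _ hsq
    have hlog : Nat.log 2 x = Nat.log 2 (x / 2) + 1 := Nat.log_of_one_lt_of_le (by norm_num) hx2
    refine ⟨mc + (n1 + n0), ?_, ?_, ?_⟩
    · convert hrep using 1
      rw [alpha_apply]
      group
    · intro i
      rcases i with _ | _ | i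
      · simp; nlinarith
      · simp; nlinarith
      · have e0 := b0 (i + 1)
        have e1 := b1 (i + 1)
        simp only [Pi.add_apply, hc2, c02, c12, zero_add, Nat.add_sub_cancel] at e0 e1 ⊢
        rw [pow_succ]
        nlinarith
    · intro i hi
      rcases i with _ | _ | i
      · omega
      · omega
      · simp [hc2, c02, c12, z0 (i + 1) (by omega), z1 (i + 1) (by omega)]

/-! ### Heights are well defined -/

def cA : F4 →* Multiplicative ℤ :=
  FreeGroup.lift fun y => match y with
    | L4.a => Multiplicative.ofAdd 1
    | _ => 1

def cD : F4 →* Multiplicative ℤ :=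
  FreeGroup.lift fun y => match y with
    | L4.a => Multiplicative.ofAdd 1
    | _ => Multiplicative.ofAdd (-1)

theorem cA_sigma (w : F4) : cA (sigma w) = cA w ^ 2 := by
  have : cA.comp sigma = (powMonoidHom 2).comp cA := by
    ext y
    cases y <;> simp [cA, sigma, ga, gb, gc, gd] 
  exact DFunLike.congr_fun this w

theorem cD_sigma (w : F4) : cD (sigma w) = cD w := by
  have : cD.comp sigma = cD := by
    ext y
    cases y <;> simp [cD, sigma, ga, gb, gc, gd]
  exact DFunLike.congr_fun this w

theorem cA_iter (i : ℕ) (w : F4) : (cA ((⇑sigma)^[i] w)).toAdd = 2 ^ i * (cA w).toAdd := by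
  induction i with
  | zero => simp
  | succ i ih =>
    rw [Function.iterate_succ_apply', cA_sigma, toAdd_pow, ih, pow_succ]
    simp; ring

theorem cD_iter (i : ℕ) (w : F4) : (cD ((⇑sigma)^[i] w)).toAdd = (cD w).toAdd := by
  induction i with
  | zero => simp
  | succ i ih => rw [Function.iterate_succ_apply', cD_sigma, ih]

theorem height_inv {R : F4} {i : ℕ} (hR : R ∈ ShStar i) :
    ((cA R).toAdd = 0 ∧ i = 0) ∨ ((cA R).toAdd = 2 ^ i * 4 ∧ (cD R).toAdd = 0) ∨
    ((cA R).toAdd = 2 ^ i * 12 ∧ (cD R).toAdd = 0) ∨ ((cA R).toAdd = 2 ^ i * 2 ∧ (cD R).toAdd = 2) := by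
  have A1 : (cA ((ga * gd) ^ 4)).toAdd = 4 := by simp [cA, ga, gd]
  have A2 : (cA ((ga * gd * ga * gc * ga * gc) ^ 4)).toAdd = 12 := by simp [cA, ga, gc, gd]
  have A3 : (cA (ga ^ 2)).toAdd = 2 := by simp [cA, ga]
  have D1 : (cD ((ga * gd) ^ 4)).toAdd = 0 := by simp [cD, ga, gd]
  have D2 : (cD ((ga * gd * ga * gc * ga * gc) ^ 4)).toAdd = 0 := by simp [cD, ga, gc, gd]
  have D3 : (cD (ga ^ 2)).toAdd = 2 := by simp [cD, ga]
  rcases i with _ | i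
  · simp only [ShStar, Set.mem_insert_iff, Set.mem_singleton_iff] at hR
    rcases hR with h | h | h | h | h | h | h <;> subst h
    · exact Or.inr (Or.inr (Or.inr ⟨by rw [A3]; norm_num, D3⟩))
    · left; simp [cA, gb]
    · left; simp [cA, gc]
    · left; simp [cA, gd]
    · left; simp [cA, gb, gc, gd]
    · exact Or.inr (Or.inl ⟨by rw [A1]; norm_num, D1⟩)
    · exact Or.inr (Or.inr (Or.inl ⟨by rw [A2]; norm_num, D2⟩))
  · simp only [ShStar, Set.mem_insert_iff, Set.mem_singleton_iff] at hR
    rcases hR with h | h | h <;> subst h <;> rw [cA_iter, cD_iter]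
    · rw [A1, D1]; simp
    · rw [A2, D2]; simp
    · rw [A3, D3]; simp

theorem pow_aux {i j : ℕ} (h : (2 : ℤ) ^ i * 4 = 2 ^ j * 12) : False := by
  have h' : (2 : ℤ) ^ i = 2 ^ j * 3 := by linarith
  rcases Nat.lt_or_ge i j with hij | hij
  · have : (2 : ℤ) ^ i < 2 ^ j := pow_lt_pow_right₀ (by norm_num) hij
    have : (0 : ℤ) < 2 ^ j := by positivity
    linarith
  · obtain ⟨k, rfl⟩ := Nat.exists_eq_add_of_le hij
    rw [pow_add] at h'
    have h3 : (2 : ℤ) ^ k = 3 := mul_left_cancel₀ (by positivity) h'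
    rcases k with _ | k
    · norm_num at h3
    · rw [pow_succ] at h3; omega

theorem height_unique {R : F4} {i j : ℕ} (hi : R ∈ ShStar i) (hj : R ∈ ShStar j) : i = j := by
  have pi : (0 : ℤ) < 2 ^ i := by positivity
  have pj : (0 : ℤ) < 2 ^ j := by positivity
  have inj : (2 : ℤ) ^ i = 2 ^ j → i = j := fun h => pow_right_injective₀ (by norm_num) (by norm_num) h
  rcases height_inv hi with ⟨a1, b1⟩ | ⟨a1, b1⟩ | ⟨a1, b1⟩ | ⟨a1, b1⟩ <;>
  rcases height_inv hj with ⟨a2, b2⟩ | ⟨a2, b2⟩ | ⟨a2, b2⟩ | ⟨a2, b2⟩ <;>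
  first
  | omega
  | exact (pow_aux (a1.symm.trans a2)).elim
  | exact (pow_aux (a2.symm.trans a1)).elim
  | exact inj (by linarith)

theorem ShStar_sub {R : F4} {i : ℕ} (hR : R ∈ ShStar i) : R ∈ RinfStar := by
  rcases i with _ | i
  · left
    simp only [ShStar, Set.mem_insert_iff, Set.mem_singleton_iff] at hR
    rcases hR with h | h | h | h | h | h | h <;> subst h
    any_goals simp [Rinf]; done
    · exact Or.inl (Or.inr ⟨0, rfl⟩)
    · exact Or.inr ⟨0, rfl⟩
  · simp only [ShStar, Set.mem_insert_iff, Set.mem_singleton_iff] at hR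
    rcases hR with h | h | h <;> subst h
    · exact Or.inl (Or.inl (Or.inr ⟨i + 1, rfl⟩))
    · exact Or.inl (Or.inr ⟨i + 1, rfl⟩)
    · exact Or.inr ⟨i + 1, by omega, rfl⟩

open Classical in
theorem HRep.toList {n : ℕ → ℕ} {W : F4} (h : HRep n W) : ∃ l : List (F4 × F4 × ℤ),
    (∀ t ∈ l, (∃ i, t.2.1 ∈ ShStar i) ∧ (t.2.2 = 1 ∨ t.2.2 = -1)) ∧
    W = (l.map fun t => t.1 * t.2.1 ^ t.2.2 * t.1⁻¹).prod ∧
    ∀ i, l.countP (fun t => decide (t.2.1 ∈ ShStar i)) = n i := by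
  induction h with
  | one => exact ⟨[], by simp, by simp, by simp⟩
  | @step n W X R e i h hR he ih =>
    obtain ⟨l, h1, h2, h3⟩ := ih
    refine ⟨(X, R, e) :: l, ?_, ?_, ?_⟩
    · intro t ht
      rcases List.mem_cons.1 ht with rfl | ht
      · exact ⟨⟨i, hR⟩, he⟩
      · exact h1 t ht
    · simp [h2]
    · intro j
      rw [List.countP_cons, h3]
      by_cases hij : j = i
      · subst hij; simp [hR]
      · have : R ∉ ShStar j := fun h => hij (height_unique h hR)
        simp [this, Pi.single_apply, hij]

open Classical in
theorem card_get {α : Type*} (P : α → Prop) (l : List α) :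
    Nat.card {j : Fin l.length // P (l.get j)} = l.countP (fun t => decide (P t)) := by
  rw [Nat.card_eq_fintype_card, Fintype.card_subtype]
  induction l with
  | nil => simp
  | cons t l ih =>
    rw [List.countP_cons, ← ih]
    have := Fin.card_filter_univ_succ (n := l.length) (fun j => P ((t :: l).get j))
    simp only [List.length_cons] at this ⊢
    rw [this]
    by_cases h : P t
    · simp [h]
    · simp [h]

/-- every `W ∈ N(∞)` of length at most `x` admits an expression
as a product of conjugates of powers `±1` of relators of `R*(∞)` whose numbers
of relators of each height are controlled as stated. -/
theorem grigorchuk_hstar_tuple :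
    ∃ C : ℝ, 1 < C ∧
      ∀ x : ℕ, 2 ≤ x →
        ∀ W ∈ Subgroup.normalClosure Rinf, FreeGroup.norm W ≤ x →
          ∃ (L : ℕ) (X R : Fin L → F4) (ε : Fin L → ℤ),
            (∀ j, R j ∈ RinfStar ∧ (ε j = 1 ∨ ε j = -1)) ∧
            W = (List.ofFn fun j => X j * R j ^ ε j * (X j)⁻¹).prod ∧
            (Nat.card {j : Fin L // R j ∈ ShStar 0} : ℝ) ≤ C * (x : ℝ) ^ 2 ∧
            (∀ i : ℕ, 1 ≤ i → (i : ℝ) ≤ Real.logb 2 (x : ℝ) →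
              (Nat.card {j : Fin L // R j ∈ ShStar i} : ℝ) ≤
                C * (x : ℝ) ^ 2 / 2 ^ (i - 1)) ∧
            (∀ j, ∀ i : ℕ, R j ∈ ShStar i → (i : ℝ) ≤ Real.logb 2 (x : ℝ)) := by
  obtain ⟨C, hC⟩ := main_rec
  refine ⟨(C : ℝ) + 2, by have : (0 : ℝ) ≤ C := Nat.cast_nonneg C; linarith, ?_⟩
  intro x hx W hW hn
  obtain ⟨m, hm, hb, hz⟩ := hC x (by omega) W hW hn
  obtain ⟨l, h1, h2, h3⟩ := hm.toList
  have hcard : ∀ i, Nat.card {j : Fin l.length // (l.get j).2.1 ∈ ShStar i} = m i := fun i => by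
    rw [← h3 i]; exact card_get (fun t : F4 × F4 × ℤ => t.2.1 ∈ ShStar i) l
  have hbound : ∀ i, (m i : ℝ) ≤ ((C : ℝ) + 2) * (x : ℝ) ^ 2 / 2 ^ (i - 1) := by
    intro i
    rw [le_div_iff₀ (by positivity)]
    have := hb i
    have h' : (m i : ℝ) * 2 ^ (i - 1) ≤ C * (x : ℝ) ^ 2 := by exact_mod_cast this
    nlinarith [sq_nonneg (x : ℝ)]
  refine ⟨l.length, fun j => (l.get j).1, fun j => (l.get j).2.1, fun j => (l.get j).2.2, ?_, ?_, ?_, ?_, ?_⟩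
  · intro j
    obtain ⟨⟨i, hi⟩, he⟩ := h1 (l.get j) (List.get_mem l j)
    exact ⟨ShStar_sub hi, he⟩
  · rw [h2]
    congr 1
    conv_lhs => rw [← List.ofFn_get l]
    rw [List.map_ofFn]; rfl
  · rw [hcard 0]
    have := hbound 0
    simpa using this
  · intro i _ _
    rw [hcard i]
    exact hbound i
  · intro j i hi
    by_contra hlt
    have hlog : Nat.log 2 x < i := by
      by_contra hle
      apply hlt
      have h4 := Real.natLog_le_logb x 2
      have h5 : (i : ℝ) ≤ (Nat.log 2 x : ℝ) := by exact_mod_cast not_lt.1 hle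
      exact h5.trans (by exact_mod_cast h4)
    have h0 := hz i hlog
    rw [← hcard i] at h0
    have : Nonempty {j : Fin l.length // (l.get j).2.1 ∈ ShStar i} := ⟨⟨j, hi⟩⟩
    exact Nat.card_pos.ne' h0
end

section
/- For every i ∈ {1, 2, 3, …} ∪ {∞}: the normal closure N(i) of R(i) in F is contained in H(0), and ψ₀(N(i)) ⊆ N(i) × N(i). Consequently, ψ₀ induces a well-defined homomorphism ψ_i : H(i) → Γ(i) × Γ(i) on the image H(i) of H(0) in Γ(i) = F/N(i). -/
/-- A seven-letter alphabet corresponding to the free generators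
`b, c, d, aba, aca, ada, a²` of the index-2 subgroup `H(0)` of `F`. -/
inductive E7 : Type
  | eb | ec | ed | eaba | eaca | eada | eaa
  deriving DecidableEq

/-- The embedding of the free group on the seven generators into `F`, sending
the generators to `b, c, d, aba, aca, ada, a²`; its range is `H(0)`. -/
def iota : FreeGroup E7 →* F4 :=
  FreeGroup.lift fun x => match x with
    | E7.eb => gb
    | E7.ec => gc
    | E7.ed => gd
    | E7.eaba => ga * gb * ga
    | E7.eaca => ga * gc * ga
    | E7.eada => ga * gd * ga
    | E7.eaa => ga ^ 2

/-- The homomorphism `ψ₀ : H(0) → F × F` (written on the free generators of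
`H(0)`): `ψ₀(b) = (a,c)`, `ψ₀(c) = (a,d)`, `ψ₀(d) = (1,b)`, `ψ₀(aba) = (c,a)`,
`ψ₀(aca) = (d,a)`, `ψ₀(ada) = (b,1)`, `ψ₀(a²) = (1,1)`. -/
def psi : FreeGroup E7 →* F4 × F4 :=
  FreeGroup.lift fun x => match x with
    | E7.eb => (ga, gc)
    | E7.ec => (ga, gd)
    | E7.ed => (1, gb)
    | E7.eaba => (gc, ga)
    | E7.eaca => (gd, ga)
    | E7.eada => (gb, 1)
    | E7.eaa => (1, 1)

/-- The relator set `R(i)` of the presentation `Γ(i)`, `1 ≤ i < ∞`: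
`R(1) = {a², b², c², d², bcd, (ad)⁴}` and, for `i ≥ 2`,
`R(i) = R(1) ∪ {σʲ((ad)⁴) : 1 ≤ j ≤ i−1} ∪ {σʲ((adacac)⁴) : 0 ≤ j ≤ i−2}`. -/
def Rpres (i : ℕ) : Set F4 :=
  {ga ^ 2, gb ^ 2, gc ^ 2, gd ^ 2, gb * gc * gd, (ga * gd) ^ 4}
    ∪ {w | ∃ j : ℕ, 1 ≤ j ∧ j + 1 ≤ i ∧ w = (⇑sigma)^[j] ((ga * gd) ^ 4)}
    ∪ {w | ∃ j : ℕ, j + 2 ≤ i ∧ w = (⇑sigma)^[j] ((ga * gd * ga * gc * ga * gc) ^ 4)}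

/-- The assertion of STATEMENT 9 for a relator set `Rel`: the normal closure
`N` of `Rel` is contained in `H(0) = iota.range`, `ψ₀` maps `N` into `N × N`,
and consequently `ψ₀` induces a homomorphism `H(i) → Γ(i) × Γ(i)` on the image
`H(i)` of `H(0)` in `Γ(i) = F/N`. -/
def PsiDescends (Rel : Set F4) : Prop :=
  (Subgroup.normalClosure Rel : Set F4) ⊆ (iota.range : Set F4) ∧
  (∀ e : FreeGroup E7, iota e ∈ Subgroup.normalClosure Rel →
     psi e ∈ (Subgroup.normalClosure Rel).prod (Subgroup.normalClosure Rel)) ∧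
  ∃ ψi : (iota.range.map (QuotientGroup.mk' (Subgroup.normalClosure Rel))) →*
           (F4 ⧸ Subgroup.normalClosure Rel) × (F4 ⧸ Subgroup.normalClosure Rel),
    ∀ e : FreeGroup E7,
      ψi ⟨QuotientGroup.mk' (Subgroup.normalClosure Rel) (iota e),
          Subgroup.mem_map.mpr ⟨iota e, MonoidHom.mem_range.mpr ⟨e, rfl⟩, rfl⟩⟩ =
        (QuotientGroup.mk' (Subgroup.normalClosure Rel) (psi e).1,
         QuotientGroup.mk' (Subgroup.normalClosure Rel) (psi e).2)

section helpers

theorem iota_range_normal : (iota.range).Normal := by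
  have mb : gb ∈ iota.range := ⟨FreeGroup.of E7.eb, by simp [iota]⟩
  have mc : gc ∈ iota.range := ⟨FreeGroup.of E7.ec, by simp [iota]⟩
  have md : gd ∈ iota.range := ⟨FreeGroup.of E7.ed, by simp [iota]⟩
  have maba : ga * gb * ga ∈ iota.range := ⟨FreeGroup.of E7.eaba, by simp [iota]⟩
  have maca : ga * gc * ga ∈ iota.range := ⟨FreeGroup.of E7.eaca, by simp [iota]⟩
  have mada : ga * gd * ga ∈ iota.range := ⟨FreeGroup.of E7.eada, by simp [iota]⟩
  have maa : ga ^ 2 ∈ iota.range := ⟨FreeGroup.of E7.eaa, by simp [iota]⟩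
  have key : ∀ e : FreeGroup E7, ga * iota e * ga⁻¹ ∈ iota.range := by
    intro e
    induction e using FreeGroup.induction_on with
    | C1 => simp
    | of x =>
      have h1 : ∀ y, ga * y * ga ∈ iota.range → ga * y * ga⁻¹ ∈ iota.range := by
        intro y hy
        have := mul_mem hy (inv_mem maa)
        rwa [show ga * y * ga * (ga ^ 2)⁻¹ = ga * y * ga⁻¹ by group] at this
      have h2 : ∀ y, y ∈ iota.range → ga * (ga * y * ga) * ga⁻¹ ∈ iota.range := by
        intro y hy
        have := mul_mem maa hy
        rwa [show ga ^ 2 * y = ga * (ga * y * ga) * ga⁻¹ by rw [pow_two]; group] at this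
      cases x
      · simpa [iota] using h1 _ maba
      · simpa [iota] using h1 _ maca
      · simpa [iota] using h1 _ mada
      · simpa [iota] using h2 _ mb
      · simpa [iota] using h2 _ mc
      · simpa [iota] using h2 _ md
      · have : ga * iota (FreeGroup.of E7.eaa) * ga⁻¹ = ga ^ 2 := by
          simp only [iota, FreeGroup.lift_apply_of]; group
        rw [this]; exact maa
    | inv_of x hx =>
      have := inv_mem hx
      rwa [show (ga * iota (FreeGroup.of x) * ga⁻¹)⁻¹ = ga * iota (FreeGroup.of x)⁻¹ * ga⁻¹ by
        rw [map_inv]; group] at this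
    | mul x y hx hy =>
      have := mul_mem hx hy
      rwa [show (ga * iota x * ga⁻¹) * (ga * iota y * ga⁻¹) = ga * iota (x * y) * ga⁻¹ by
        rw [map_mul]; group] at this
  have key' : ∀ n ∈ iota.range, ga * n * ga⁻¹ ∈ iota.range := by
    rintro _ ⟨e, rfl⟩; exact key e
  have keyi : ∀ n ∈ iota.range, ga⁻¹ * n * ga⁻¹⁻¹ ∈ iota.range := by
    intro n hn
    have := mul_mem (mul_mem (inv_mem maa) (key' n hn)) maa
    rwa [show (ga ^ 2)⁻¹ * (ga * n * ga⁻¹) * ga ^ 2 = ga⁻¹ * n * ga⁻¹⁻¹ by group] at this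
  have triv : ∀ g ∈ iota.range, ∀ n ∈ iota.range, g * n * g⁻¹ ∈ iota.range :=
    fun g hg n hn => mul_mem (mul_mem hg hn) (inv_mem hg)
  refine ⟨fun n hn g => ?_⟩
  revert n
  induction g using FreeGroup.induction_on with
  | C1 => simp
  | of x =>
    cases x
    · exact key'
    · exact triv _ mb
    · exact triv _ mc
    · exact triv _ md
  | inv_of x _ =>
    cases x
    · exact keyi
    · exact triv _ (inv_mem mb)
    · exact triv _ (inv_mem mc)
    · exact triv _ (inv_mem md)
  | mul x y hx hy =>
    intro n hn
    have := hx _ (hy n hn)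
    rwa [show x * (y * n * y⁻¹) * x⁻¹ = x * y * n * (x * y)⁻¹ by group] at this

theorem sigma_mem (x : F4) : sigma x ∈ iota.range := by
  induction x using FreeGroup.induction_on with
  | C1 => simp
  | of x =>
    cases x
    · exact ⟨FreeGroup.of E7.eaca, by simp [iota, sigma]⟩
    · exact ⟨FreeGroup.of E7.ed, by simp [iota, sigma]⟩
    · exact ⟨FreeGroup.of E7.eb, by simp [iota, sigma]⟩
    · exact ⟨FreeGroup.of E7.ec, by simp [iota, sigma]⟩
  | inv_of x hx => rw [map_inv]; exact inv_mem hx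
  | mul x y hx hy => rw [map_mul]; exact mul_mem hx hy

/-- preimages under iota of the two fourth powers -/
theorem iota_ad : iota ((FreeGroup.of E7.eada * FreeGroup.of E7.ed) ^ 2) = (ga * gd) ^ 4 := by
  simp only [iota, map_pow, map_mul, FreeGroup.lift_apply_of]
  simp only [pow_succ, pow_zero, one_mul, mul_assoc]

theorem iota_adacac : iota ((FreeGroup.of E7.eada * FreeGroup.of E7.ec * FreeGroup.of E7.eaca *
    FreeGroup.of E7.ed * FreeGroup.of E7.eaca * FreeGroup.of E7.ec) ^ 2)
    = (ga * gd * ga * gc * ga * gc) ^ 4 := by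
  simp only [iota, map_pow, map_mul, FreeGroup.lift_apply_of]
  simp only [pow_succ, pow_zero, one_mul, mul_assoc]

/-- Dihedral group of order 8 has exponent dividing 4. -/
theorem dihedral_pow_s9 {Q : Type*} [Group Q] (a d : Q) (ha : a ^ 2 = 1) (hd : d ^ 2 = 1)
    (hr : (a * d) ^ 4 = 1) (f : F4 →* Q)
    (hf : ∀ x : L4, f (FreeGroup.of x) = 1 ∨ f (FreeGroup.of x) = a ∨ f (FreeGroup.of x) = d)
    (w : F4) : f w ^ 4 = 1 := by
  have ha' : a⁻¹ = a := by rw [inv_eq_iff_mul_eq_one, ← pow_two, ha]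
  have hd' : d⁻¹ = d := by rw [inv_eq_iff_mul_eq_one, ← pow_two, hd]
  have haa : a * a = 1 := by rw [← pow_two, ha]
  have hsc : SemiconjBy a (a * d) (a * d)⁻¹ := by
    rw [SemiconjBy, mul_inv_rev, ha', hd', ← mul_assoc, haa, mul_assoc, haa]; simp
  have hk : ∀ k : ℤ, a * (a * d) ^ k = (a * d) ^ (-k) * a := by
    intro k
    have := hsc.zpow_right k
    rw [SemiconjBy, inv_zpow'] at this
    exact this
  have hp : ∀ w, ∃ k : ℤ, f w = (a * d) ^ k ∨ f w = (a * d) ^ k * a := by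
    intro w
    induction w using FreeGroup.induction_on with
    | C1 => exact ⟨0, by simp⟩
    | of x =>
      rcases hf x with h | h | h
      · exact ⟨0, by simp [h]⟩
      · exact ⟨0, by simp [h]⟩
      · refine ⟨-1, Or.inr ?_⟩
        rw [h, zpow_neg_one, mul_inv_rev, hd', ha', mul_assoc, haa, mul_one]
    | inv_of x hx =>
      obtain ⟨k, h | h⟩ := hx
      · exact ⟨-k, Or.inl (by rw [map_inv, h, zpow_neg])⟩
      · exact ⟨k, Or.inr (by rw [map_inv, h, mul_inv_rev, ha', ← zpow_neg, hk, neg_neg])⟩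
    | mul x y hx hy =>
      obtain ⟨k, h | h⟩ := hx <;> obtain ⟨l, h' | h'⟩ := hy
      · exact ⟨k + l, Or.inl (by rw [map_mul, h, h', zpow_add])⟩
      · exact ⟨k + l, Or.inr (by rw [map_mul, h, h', zpow_add, mul_assoc])⟩
      · exact ⟨k - l, Or.inr (by rw [map_mul, h, h', mul_assoc, hk, sub_eq_add_neg, zpow_add,
          mul_assoc])⟩
      · refine ⟨k - l, Or.inl ?_⟩
        rw [map_mul, h, h', mul_assoc, ← mul_assoc a, hk, mul_assoc, haa, mul_one,
          sub_eq_add_neg, zpow_add]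
  obtain ⟨k, h | h⟩ := hp w
  · rw [h, ← zpow_natCast, ← zpow_mul, mul_comm, zpow_mul, zpow_natCast, hr, one_zpow]
  · have : f w ^ 2 = 1 := by
      rw [h, pow_two, mul_assoc, ← mul_assoc a, hk, mul_assoc, haa, mul_one, ← zpow_add]
      simp
    rw [show 4 = 2 * 2 from rfl, pow_mul, this, one_pow]

abbrev Wr (Q : Type) [Group Q] : Type := (Q × Q) ⋊[MonoidHom.id (MulAut (Q × Q))] MulAut (Q × Q)

def swp (Q : Type) [Group Q] : MulAut (Q × Q) := MulEquiv.prodComm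

theorem swp_mul (Q : Type) [Group Q] : swp Q * swp Q = 1 := by
  ext x <;> rfl

def Phi {Q : Type} [Group Q] (q : F4 →* Q) : F4 →* Wr Q :=
  FreeGroup.lift fun x => match x with
    | L4.a => SemidirectProduct.inr (swp Q)
    | L4.b => SemidirectProduct.inl (q ga, q gc)
    | L4.c => SemidirectProduct.inl (q ga, q gd)
    | L4.d => SemidirectProduct.inl (1, q gb)

theorem Phi_a {Q : Type} [Group Q] (q : F4 →* Q) : Phi q ga = SemidirectProduct.inr (swp Q) := by
  simp [Phi, ga]
theorem Phi_b {Q : Type} [Group Q] (q : F4 →* Q) :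
    Phi q gb = SemidirectProduct.inl (q ga, q gc) := by
  simp [Phi, gb]
theorem Phi_c {Q : Type} [Group Q] (q : F4 →* Q) :
    Phi q gc = SemidirectProduct.inl (q ga, q gd) := by
  simp [Phi, gc]
theorem Phi_d {Q : Type} [Group Q] (q : F4 →* Q) :
    Phi q gd = SemidirectProduct.inl (1, q gb) := by
  simp [Phi, gd]

theorem swp_conj {Q : Type} [Group Q] (x y : Q) :
    (SemidirectProduct.inr (swp Q) * SemidirectProduct.inl (x, y) * SemidirectProduct.inr (swp Q)
      : Wr Q) = SemidirectProduct.inl (y, x) := by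
  apply SemidirectProduct.ext
  · simp [swp]
  · simp [swp_mul]

theorem Phi_iota {Q : Type} [Group Q] (q : F4 →* Q) (e : FreeGroup E7) :
    Phi q (iota e) = SemidirectProduct.inl (q (psi e).1, q (psi e).2) := by
  have : (Phi q).comp iota = (SemidirectProduct.inl).comp ((q.prodMap q).comp psi) := by
    apply FreeGroup.ext_hom
    intro x
    cases x
    · simp [iota, psi, Phi_b]
    · simp [iota, psi, Phi_c]
    · simp [iota, psi, Phi_d]
    · simp [iota, psi, Phi_a, Phi_b, swp_conj]
    · simp [iota, psi, Phi_a, Phi_c, swp_conj]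
    · simp [iota, psi, Phi_a, Phi_d, swp_conj]
    · have h1 : Phi q (ga ^ 2) = 1 := by
        rw [map_pow, Phi_a, pow_two, ← map_mul, swp_mul, map_one]
      simp only [iota, psi, MonoidHom.comp_apply, FreeGroup.lift_apply_of, h1]
      rw [Prod.mk_one_one, map_one, map_one]
  exact DFunLike.congr_fun this e

def theta : F4 →* F4 :=
  FreeGroup.lift fun x => match x with
    | L4.a => gd
    | L4.b => 1
    | L4.c => ga
    | L4.d => ga

theorem Phi_sigma {Q : Type} [Group Q] (q : F4 →* Q) (w : F4) :
    Phi q (sigma w) = SemidirectProduct.inl (q (theta w), q w) := by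
  have : (Phi q).comp sigma = (SemidirectProduct.inl).comp ((q.comp theta).prod q) := by
    apply FreeGroup.ext_hom
    intro x
    cases x
    · simp [sigma, theta, Phi_a, Phi_c, swp_conj]; rfl
    · simp [sigma, theta, Phi_d]; rfl
    · simp [sigma, theta, Phi_b]; rfl
    · simp [sigma, theta, Phi_c]; rfl
  exact DFunLike.congr_fun this w

theorem core (Rel : Set F4)
    (h6 : ({ga ^ 2, gb ^ 2, gc ^ 2, gd ^ 2, gb * gc * gd, (ga * gd) ^ 4} : Set F4) ⊆ Rel)
    (hR : ∀ w ∈ Rel, w ∈ ({ga ^ 2, gb ^ 2, gc ^ 2, gd ^ 2, gb * gc * gd, (ga * gd) ^ 4} : Set F4) ∨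
      w = (ga * gd * ga * gc * ga * gc) ^ 4 ∨ ∃ v, v ^ 4 ∈ Rel ∧ w = sigma (v ^ 4)) :
    PsiDescends Rel := by
  let q := QuotientGroup.mk' (Subgroup.normalClosure Rel)
  have hq1 : ∀ w ∈ Rel, q w = 1 := fun w hw =>
    (QuotientGroup.eq_one_iff w).2 (Subgroup.subset_normalClosure hw)
  have qa : q ga ^ 2 = 1 := by rw [← map_pow]; exact hq1 _ (h6 (by simp))
  have qb : q gb ^ 2 = 1 := by rw [← map_pow]; exact hq1 _ (h6 (by simp))
  have qc : q gc ^ 2 = 1 := by rw [← map_pow]; exact hq1 _ (h6 (by simp))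
  have qd : q gd ^ 2 = 1 := by rw [← map_pow]; exact hq1 _ (h6 (by simp))
  have qbcd : q gb * q gc * q gd = 1 := by
    rw [← map_mul, ← map_mul]; exact hq1 _ (h6 (by simp))
  have qad : (q ga * q gd) ^ 4 = 1 := by
    rw [← map_mul, ← map_pow]; exact hq1 _ (h6 (by simp))
  have qa' : q ga * q ga = 1 := by rw [← pow_two, qa]
  have qd' : q gd * q gd = 1 := by rw [← pow_two, qd]
  have qb' : q gb * q gb = 1 := by rw [← pow_two, qb]
  have qcdb : q gc * q gd * q gb = 1 := by
    have : q gc * q gd = (q gb)⁻¹ := by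
      rw [eq_inv_iff_mul_eq_one, ← mul_eq_one_iff_eq_inv'.trans eq_inv_iff_mul_eq_one] 
      rw [← mul_assoc]; exact qbcd
    rw [this]; simp
  have kill : ∀ w ∈ Rel, Phi q w = 1 := by
    intro w hw
    rcases hR w hw with h | h | ⟨v, hv, rfl⟩
    · simp only [Set.mem_insert_iff, Set.mem_singleton_iff] at h
      rcases h with rfl | rfl | rfl | rfl | rfl | rfl
      · rw [map_pow, Phi_a, pow_two, ← map_mul, swp_mul, map_one]
      · rw [map_pow, Phi_b, ← map_pow, Prod.pow_mk, qa, qc]; exact map_one _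
      · rw [map_pow, Phi_c, ← map_pow, Prod.pow_mk, qa, qd]; exact map_one _
      · rw [map_pow, Phi_d, ← map_pow, Prod.pow_mk, qb, one_pow]; exact map_one _
      · rw [map_mul, map_mul, Phi_b, Phi_c, Phi_d, ← map_mul, ← map_mul, Prod.mk_mul_mk,
          Prod.mk_mul_mk, qa', qcdb, mul_one]; exact map_one _
      · rw [← iota_ad, Phi_iota]
        simp only [psi, map_pow, map_mul, FreeGroup.lift_apply_of, Prod.mk_mul_mk, Prod.pow_mk,
          mul_one, one_mul, qb]
        exact map_one _
    · subst h
      rw [← iota_adacac, Phi_iota]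
      have e1 : (q gb * q ga * q gd * q gd * q ga) ^ 2 = 1 := by
        rw [mul_assoc _ (q gd) (q gd), qd', mul_one, mul_assoc, qa', mul_one, qb]
      have e2 : (q gd * q ga * q gb * q ga * q gd) ^ 2 = 1 := by
        have ha : q ga = (q ga)⁻¹ := by rw [eq_inv_iff_mul_eq_one, qa']
        have hd : q gd = (q gd)⁻¹ := by rw [eq_inv_iff_mul_eq_one, qd']
        have : q gd * q ga * q gb * q ga * q gd = (q gd * q ga) * q gb * (q gd * q ga)⁻¹ := by
          rw [mul_inv_rev, ← ha, ← hd]; simp only [mul_assoc]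
        rw [this, conj_pow, qb]; simp
      simp only [psi, map_pow, map_mul, FreeGroup.lift_apply_of, Prod.mk_mul_mk, Prod.pow_mk,
          mul_one, one_mul, e1, e2]
      exact map_one _
    · rw [Phi_sigma, hq1 _ hv, map_pow, map_pow]
      have := dihedral_pow_s9 (q ga) (q gd) qa qd qad (q.comp theta) (by
        intro x; cases x <;> simp [theta]) v
      rw [MonoidHom.comp_apply] at this
      rw [this]; exact map_one _
  have hker : Subgroup.normalClosure Rel ≤ (Phi q).ker :=
    Subgroup.normalClosure_le_normal fun w hw => kill w hw
  refine ⟨?_, ?_, ?_⟩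
  · have := iota_range_normal
    refine Subgroup.normalClosure_le_normal (N := iota.range) fun w hw => ?_
    have maa : ga ^ 2 ∈ iota.range := ⟨FreeGroup.of E7.eaa, by simp [iota]⟩
    have mb : gb ∈ iota.range := ⟨FreeGroup.of E7.eb, by simp [iota]⟩
    have mc : gc ∈ iota.range := ⟨FreeGroup.of E7.ec, by simp [iota]⟩
    have md : gd ∈ iota.range := ⟨FreeGroup.of E7.ed, by simp [iota]⟩
    rcases hR w hw with h | h | ⟨v, hv, rfl⟩
    · simp only [Set.mem_insert_iff, Set.mem_singleton_iff] at h
      rcases h with rfl | rfl | rfl | rfl | rfl | rfl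
      · exact maa
      · exact pow_mem mb 2
      · exact pow_mem mc 2
      · exact pow_mem md 2
      · exact mul_mem (mul_mem mb mc) md
      · exact ⟨_, iota_ad⟩
    · exact ⟨_, iota_adacac.trans h.symm⟩
    · exact sigma_mem _
  · intro e he
    have h := hker he
    rw [MonoidHom.mem_ker, Phi_iota] at h
    have h2 := congrArg SemidirectProduct.left h
    simp only [SemidirectProduct.left_inl, SemidirectProduct.one_left, Prod.mk_eq_one] at h2
    exact Subgroup.mem_prod.2 ⟨(QuotientGroup.eq_one_iff _).1 h2.1,
      (QuotientGroup.eq_one_iff _).1 h2.2⟩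
  · let P : F4 ⧸ Subgroup.normalClosure Rel →* Wr (F4 ⧸ Subgroup.normalClosure Rel) :=
      QuotientGroup.lift _ (Phi q) hker
    have hP : ∀ e, P (q (iota e)) = SemidirectProduct.inl (q (psi e).1, q (psi e).2) := by
      intro e; exact Phi_iota q e
    refine ⟨MonoidHom.mk' (fun x => (P x.1).left) ?_, ?_⟩
    · rintro ⟨_, _, ⟨e, rfl⟩, rfl⟩ ⟨_, _, ⟨f, rfl⟩, rfl⟩
      change (P (q (iota e) * q (iota f))).left = (P (q (iota e))).left * (P (q (iota f))).left
      rw [map_mul, hP, hP, ← map_mul]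
      simp only [SemidirectProduct.left_inl]
    · intro e
      change (P (q (iota e))).left = _
      rw [hP]
      rfl

end helpers

/-- for every `i ∈ {1, 2, 3, …} ∪ {∞}`, the map `ψ₀` descends to
a homomorphism `ψᵢ : H(i) → Γ(i) × Γ(i)`. -/
theorem psi_descends_for_all_levels :
    (∀ i : ℕ, 1 ≤ i → PsiDescends (Rpres i)) ∧ PsiDescends Rinf := by
  have hit : ∀ (k : ℕ) (x : F4), (⇑sigma)^[k] (x ^ 4) = ((⇑sigma)^[k] x) ^ 4 :=
    fun k x => iterate_map_pow sigma k x 4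
  constructor
  · intro i _
    apply core
    · exact fun w hw => Or.inl (Or.inl hw)
    · rintro w ((hw | ⟨j, hj, hji, rfl⟩) | ⟨j, hji, rfl⟩)
      · exact Or.inl hw
      · obtain ⟨k, rfl⟩ : ∃ k, j = k + 1 := ⟨j - 1, by omega⟩
        refine Or.inr (Or.inr ⟨(⇑sigma)^[k] (ga * gd), ?_, ?_⟩)
        · rw [← hit]
          rcases Nat.eq_zero_or_pos k with rfl | hk
          · exact Or.inl (Or.inl (by simp))
          · exact Or.inl (Or.inr ⟨k, hk, by omega, rfl⟩)
        · rw [← hit, Function.iterate_succ_apply']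
      · rcases j with _ | k
        · exact Or.inr (Or.inl rfl)
        · refine Or.inr (Or.inr ⟨(⇑sigma)^[k] (ga * gd * ga * gc * ga * gc), ?_, ?_⟩)
          · rw [← hit]
            exact Or.inr ⟨k, by omega, rfl⟩
          · rw [← hit, Function.iterate_succ_apply']
  · apply core
    · intro w hw
      simp only [Set.mem_insert_iff, Set.mem_singleton_iff] at hw
      rcases hw with rfl | rfl | rfl | rfl | rfl | rfl
      · exact Or.inl (Or.inl (by simp))
      · exact Or.inl (Or.inl (by simp))
      · exact Or.inl (Or.inl (by simp))
      · exact Or.inl (Or.inl (by simp))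
      · exact Or.inl (Or.inl (by simp))
      · exact Or.inl (Or.inr ⟨0, rfl⟩)
    · rintro w ((hw | ⟨j, rfl⟩) | ⟨j, rfl⟩)
      · left
        simp only [Set.mem_insert_iff, Set.mem_singleton_iff] at hw ⊢
        tauto
      · rcases j with _ | k
        · exact Or.inl (by simp)
        · refine Or.inr (Or.inr ⟨(⇑sigma)^[k] (ga * gd), ?_, ?_⟩)
          · rw [← hit]
            exact Or.inl (Or.inr ⟨k, rfl⟩)
          · rw [← hit, Function.iterate_succ_apply']
      · rcases j with _ | k
        · exact Or.inr (Or.inl rfl)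
        · refine Or.inr (Or.inr ⟨(⇑sigma)^[k] (ga * gd * ga * gc * ga * gc), ?_, ?_⟩)
          · rw [← hit]
            exact Or.inr ⟨k, rfl⟩
          · rw [← hit, Function.iterate_succ_apply']
end

section
/- For every element h of H(0), one has ψ₀(h) ∈ N(1) × N(1) if and only if h ∈ N(2). Equivalently, the kernel of the induced homomorphism ψ₁ : H(1) → Γ(1) × Γ(1) equals N(2)/N(1), the normal subgroup of Γ(1) generated by the images of (ac)⁸ = σ((ad)⁴) and (adacac)⁴. -/
namespace KerPsi

lemma inv_eq_self {G : Type*} [Group G] {x : G} (h : x * x = 1) : x⁻¹ = x :=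
  inv_eq_of_mul_eq_one_left h

lemma rel1_base : ∀ w ∈ ({ga ^ 2, gb ^ 2, gc ^ 2, gd ^ 2, gb * gc * gd, (ga * gd) ^ 4} : Set F4),
    ∀ i, w ∈ Rpres i := fun _ hw _ => Or.inl (Or.inl hw)

lemma lift1 {G : Type*} [Group G] (f : F4 →* G) (ha : f ga * f ga = 1) (hb : f gb * f gb = 1)
    (hc : f gc * f gc = 1) (hd : f gd * f gd = 1) (hbcd : f gb * f gc * f gd = 1)
    (had : (f ga * f gd) ^ 4 = 1) : Subgroup.normalClosure (Rpres 1) ≤ f.ker := by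
  apply Subgroup.normalClosure_le_normal
  rintro w ((hw | ⟨j, h1, h2, rfl⟩) | ⟨j, h1, rfl⟩)
  · simp only [Set.mem_insert_iff, Set.mem_singleton_iff] at hw
    rcases hw with rfl | rfl | rfl | rfl | rfl | rfl <;>
      simp [MonoidHom.mem_ker, pow_two, *]
  · omega
  · omega

lemma lift2 {G : Type*} [Group G] (f : F4 →* G) (ha : f ga * f ga = 1) (hb : f gb * f gb = 1)
    (hc : f gc * f gc = 1) (hd : f gd * f gd = 1) (hbcd : f gb * f gc * f gd = 1)
    (had : (f ga * f gd) ^ 4 = 1) (hac : (f ga * f gc * f ga * f gc) ^ 4 = 1)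
    (hadac : (f ga * f gd * f ga * f gc * f ga * f gc) ^ 4 = 1) :
    Subgroup.normalClosure (Rpres 2) ≤ f.ker := by
  apply Subgroup.normalClosure_le_normal
  rintro w ((hw | ⟨j, h1, h2, rfl⟩) | ⟨j, h1, rfl⟩)
  · simp only [Set.mem_insert_iff, Set.mem_singleton_iff] at hw
    rcases hw with rfl | rfl | rfl | rfl | rfl | rfl <;>
      simp [MonoidHom.mem_ker, pow_two, *]
  · obtain rfl : j = 1 := by omega
    have e1 : sigma ga = ga * gc * ga := by simp [sigma, ga]
    have e2 : sigma gd = gc := by simp [sigma, gd]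
    simp [MonoidHom.mem_ker, e1, e2, hac]
  · obtain rfl : j = 0 := by omega
    simp [MonoidHom.mem_ker, hadac]

/-- The relations in a quotient. -/
structure Rels {G : Type*} [Group G] (A B C D : G) : Prop where
  a : A * A = 1
  b : B * B = 1
  c : C * C = 1
  d : D * D = 1
  bcd : B * C * D = 1
  ad : (A * D) ^ 4 = 1

lemma rels (i : ℕ) : Rels (QuotientGroup.mk' (Subgroup.normalClosure (Rpres i)) ga)
    (QuotientGroup.mk' (Subgroup.normalClosure (Rpres i)) gb)
    (QuotientGroup.mk' (Subgroup.normalClosure (Rpres i)) gc)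
    (QuotientGroup.mk' (Subgroup.normalClosure (Rpres i)) gd) := by
  have key : ∀ w ∈ ({ga ^ 2, gb ^ 2, gc ^ 2, gd ^ 2, gb * gc * gd, (ga * gd) ^ 4} : Set F4),
      QuotientGroup.mk' (Subgroup.normalClosure (Rpres i)) w = 1 := fun w hw =>
    (QuotientGroup.eq_one_iff w).2 (Subgroup.subset_normalClosure (rel1_base w hw i))
  constructor
  · rw [← map_mul, ← pow_two]; exact key _ (by simp)
  · rw [← map_mul, ← pow_two]; exact key _ (by simp)
  · rw [← map_mul, ← pow_two]; exact key _ (by simp)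
  · rw [← map_mul, ← pow_two]; exact key _ (by simp)
  · rw [← map_mul, ← map_mul]; exact key _ (by simp)
  · rw [← map_mul, ← map_pow]; exact key _ (by simp)

lemma rels2 : (QuotientGroup.mk' (Subgroup.normalClosure (Rpres 2)) (ga * gc * ga * gc)) ^ 4 = 1 ∧
    (QuotientGroup.mk' (Subgroup.normalClosure (Rpres 2)) (ga * gd * ga * gc * ga * gc)) ^ 4 = 1 := by
  constructor
  · rw [← map_pow]
    refine (QuotientGroup.eq_one_iff _).2 (Subgroup.subset_normalClosure
      (Or.inl (Or.inr ⟨1, le_rfl, le_rfl, ?_⟩)))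
    have e1 : sigma ga = ga * gc * ga := by simp [sigma, ga]
    have e2 : sigma gd = gc := by simp [sigma, gd]
    simp [e1, e2]
  · rw [← map_pow]
    exact (QuotientGroup.eq_one_iff _).2 (Subgroup.subset_normalClosure
      (Or.inr ⟨0, le_rfl, rfl⟩))

/-- Action on two copies of a group. -/
def act (G : Type*) [Group G] : G × G →* Equiv.Perm (G ⊕ G) :=
  (Equiv.Perm.sumCongrHom G G).comp
    ((MulAction.toPermHom G G).prodMap (MulAction.toPermHom G G))

lemma act_inl {G : Type*} [Group G] (p : G × G) (x : G) : act G p (Sum.inl x) = Sum.inl (p.1 * x) := rfl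
lemma act_inr {G : Type*} [Group G] (p : G × G) (x : G) : act G p (Sum.inr x) = Sum.inr (p.2 * x) := rfl

/-- The wreath map. -/
def wr {G : Type*} [Group G] (A B C D : G) : F4 →* Equiv.Perm (G ⊕ G) :=
  FreeGroup.lift fun x => match x with
    | L4.a => Equiv.sumComm G G
    | L4.b => act G (A, C)
    | L4.c => act G (A, D)
    | L4.d => act G (1, B)

lemma Rels.comm {G : Type*} [Group G] {A B C D : G} (h : Rels A B C D) :
    C = B * D ∧ B * D = D * B := by
  have h1 : C = B⁻¹ * D⁻¹ := by
    have := h.bcd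
    rw [mul_assoc, mul_eq_one_iff_eq_inv] at this
    rw [this]; group
  rw [inv_eq_self h.b, inv_eq_self h.d] at h1
  refine ⟨h1, ?_⟩
  have := inv_eq_self h.c
  rw [h1, mul_inv_rev, inv_eq_self h.b, inv_eq_self h.d] at this
  exact this.symm

lemma canc {G : Type*} [Group G] {x : G} (h : x * x = 1) (y : G) : x * (x * y) = y := by
  rw [← mul_assoc, h, one_mul]

lemma ad_rev {G : Type*} [Group G] {A D : G} (a : A * A = 1) (d : D * D = 1)
    (h : (A * D) ^ 4 = 1) : (D * A) ^ 4 = 1 := by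
  have : (D * A) = (A * D)⁻¹ := by rw [mul_inv_rev, inv_eq_self a, inv_eq_self d]
  rw [this, inv_pow, h, inv_one]

lemma wr_kill {G : Type*} [Group G] {A B C D : G} (h : Rels A B C D) :
    Subgroup.normalClosure (Rpres 2) ≤ (wr A B C D).ker := by
  have ea : wr A B C D ga = Equiv.sumComm G G := by simp [wr, ga]
  have eb : wr A B C D gb = act G (A, C) := by simp [wr, gb]
  have ec : wr A B C D gc = act G (A, D) := by simp [wr, gc]
  have ed : wr A B C D gd = act G (1, B) := by simp [wr, gd]
  have h4 := h.ad
  have h5 := ad_rev h.a h.d h.ad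
  have hb := canc h.b
  have ha := canc h.a
  have hc := canc h.c
  have hd := canc h.d
  have hbcd := h.bcd
  have hdbc : ∀ x, C * (D * (B * x)) = x := by
    intro x
    obtain ⟨h1, h2⟩ := h.comm
    rw [h1, mul_assoc, hd, hb]
  simp only [pow_succ, pow_zero, one_mul] at h4 h5
  have h4' : ∀ x, A * (D * (A * (D * (A * (D * (A * (D * x))))))) = x := by
    intro x; simp only [← mul_assoc] at h4 ⊢; rw [h4, one_mul]
  have h5' : ∀ x, D * (A * (D * (A * (D * (A * (D * (A * x))))))) = x := by
    intro x; simp only [← mul_assoc] at h5 ⊢; rw [h5, one_mul]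
  apply lift2 <;> simp only [ea, eb, ec, ed] <;> ext x <;> rcases x with x | x <;>
    simp [act_inl, act_inr, pow_succ, mul_assoc, ha, hb, hc, hd, hdbc, h4', h5']

lemma wr_iota {G : Type*} [Group G] (q : F4 →* G) (ha : q ga * q ga = 1) :
    (wr (q ga) (q gb) (q gc) (q gd)).comp iota = (act G).comp ((q.prodMap q).comp psi) := by
  ext e x
  have ea : wr (q ga) (q gb) (q gc) (q gd) ga = Equiv.sumComm G G := by simp [wr, ga]
  have eb : wr (q ga) (q gb) (q gc) (q gd) gb = act G (q ga, q gc) := by simp [wr, gb]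
  have ec : wr (q ga) (q gb) (q gc) (q gd) gc = act G (q ga, q gd) := by simp [wr, gc]
  have ed : wr (q ga) (q gb) (q gc) (q gd) gd = act G (1, q gb) := by simp [wr, gd]
  cases e <;> rcases x with x | x <;>
    simp [iota, psi, ea, eb, ec, ed, act_inl, act_inr, pow_two]

lemma easy (e : FreeGroup E7) (he : iota e ∈ Subgroup.normalClosure (Rpres 2)) :
    psi e ∈ (Subgroup.normalClosure (Rpres 1)).prod (Subgroup.normalClosure (Rpres 1)) := by
  have h1 := wr_kill (rels 1) he
  rw [MonoidHom.mem_ker] at h1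
  have h2 := DFunLike.congr_fun (wr_iota (QuotientGroup.mk' (Subgroup.normalClosure (Rpres 1)))
    (rels 1).a) e
  rw [MonoidHom.comp_apply, h1] at h2
  have hl := Equiv.congr_fun h2 (Sum.inl 1)
  have hr := Equiv.congr_fun h2 (Sum.inr 1)
  simp only [MonoidHom.comp_apply, act_inl, act_inr, Equiv.Perm.coe_one, id, mul_one,
    Sum.inl.injEq, Sum.inr.injEq] at hl hr
  rw [Subgroup.mem_prod]
  exact ⟨(QuotientGroup.eq_one_iff _).1 hl.symm, (QuotientGroup.eq_one_iff _).1 hr.symm⟩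

/-- The subgroup generated by four conjugates. -/
def DD {G : Type*} [Group G] (d p q : G) : Subgroup G :=
  Subgroup.closure {d, q * d * q, p * q * d * q * p, q * p * q * d * q * p * q}

lemma norm_of {G : Type*} [Group G] {d p q g : G} (hg : g * g = 1)
    (h0 : g * d * g ∈ DD d p q) (h1 : g * (q * d * q) * g ∈ DD d p q)
    (h2 : g * (p * q * d * q * p) * g ∈ DD d p q)
    (h3 : g * (q * p * q * d * q * p * q) * g ∈ DD d p q) :
    g ∈ Subgroup.normalizer (DD d p q : Set G) := by
  have key : ∀ x ∈ DD d p q, g * x * g⁻¹ ∈ DD d p q := by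
    intro x hx
    have : DD d p q ≤ (DD d p q).comap (MulAut.conj g).toMonoidHom := by
      conv_lhs => rw [DD]
      rw [Subgroup.closure_le]
      rintro y (rfl | rfl | rfl | rfl) <;>
        simp only [Subgroup.coe_comap, Set.mem_preimage, MulEquiv.coe_toMonoidHom,
          MulAut.conj_apply, SetLike.mem_coe, inv_eq_self hg] <;> assumption
    exact this hx
  rw [Subgroup.mem_normalizer_iff]
  intro x
  refine ⟨key x, fun hx => ?_⟩
  have := key _ hx
  rw [inv_eq_self hg] at this
  simpa [mul_assoc, canc hg, hg] using this

lemma norms {G : Type*} [Group G] {d p q r : G} (hp : p * p = 1) (hq : q * q = 1) (hr : r * r = 1)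
    (hd : d * d = 1) (hpd : p * d = d * p) (hqr : q * r = r * q) (hrd : r * d = d * r)
    (hpq : (q * p) ^ 4 = 1)
    (hv : r * (p * q * d * q * p) = (p * q * d * q * p) * r) :
    p ∈ Subgroup.normalizer (DD d p q : Set G) ∧ q ∈ Subgroup.normalizer (DD d p q : Set G) ∧
      r ∈ Subgroup.normalizer (DD d p q : Set G) := by
  have m0 : d ∈ DD d p q := Subgroup.subset_closure (by simp)
  have m1 : q * d * q ∈ DD d p q := Subgroup.subset_closure (by simp)
  have m2 : p * q * d * q * p ∈ DD d p q := Subgroup.subset_closure (by simp)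
  have m3 : q * p * q * d * q * p * q ∈ DD d p q := Subgroup.subset_closure (by simp)
  have cp := canc hp
  have cq := canc hq
  have cr := canc hr
  have braid : p * q * p * q = q * p * q * p := by
    have : (q * p * q * p) * (q * p * q * p) = 1 := by
      rw [← hpq]; simp only [pow_succ, pow_zero, one_mul, mul_assoc]
    have := inv_eq_self this
    rw [← this]
    simp only [mul_inv_rev, inv_eq_self hp, inv_eq_self hq, mul_assoc]
  refine ⟨norm_of hp ?_ ?_ ?_ ?_, norm_of hq ?_ ?_ ?_ ?_, norm_of hr ?_ ?_ ?_ ?_⟩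
  · convert m0 using 1; rw [hpd, mul_assoc, hp, mul_one]
  · convert m2 using 1; simp only [mul_assoc]
  · convert m1 using 1; simp only [mul_assoc, cp, hp, mul_one]
  · convert m3 using 1
    calc p * (q * p * q * d * q * p * q) * p = (p * q * p * q) * d * (q * p * q * p) := by
          simp only [mul_assoc]
      _ = (q * p * q * p) * d * (p * q * p * q) := by rw [braid]
      _ = q * p * q * (p * d) * p * q * p * q := by simp only [mul_assoc]
      _ = _ := by rw [hpd]; simp only [mul_assoc, cp]
  · convert m1 using 1
  · convert m0 using 1; simp only [mul_assoc, cq, hq, mul_one]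
  · convert m3 using 1; simp only [mul_assoc]
  · convert m2 using 1; simp only [mul_assoc, cq, hq, mul_one]
  · convert m0 using 1; rw [hrd, mul_assoc, hr, mul_one]
  · convert m1 using 1
    calc r * (q * d * q) * r = (r * q) * d * (q * r) := by simp only [mul_assoc]
      _ = q * (r * d) * (r * q) := by
          simp only [mul_assoc, hqr]; simp only [← mul_assoc, hqr]
      _ = _ := by rw [hrd]; simp only [mul_assoc, cr]
  · convert m2 using 1; rw [hv, mul_assoc, hr, mul_one]
  · convert m3 using 1
    calc r * (q * p * q * d * q * p * q) * r = (r * q) * (p * q * d * q * p) * (q * r) := by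
          simp only [mul_assoc]
      _ = q * (r * (p * q * d * q * p)) * (r * q) := by
          simp only [mul_assoc, hqr]; simp only [← mul_assoc, hqr]
      _ = _ := by rw [hv]; simp only [mul_assoc, cr]

lemma swap_comm {G : Type*} [Group G] {x y : G} (hx : x * x = 1) (hy : y * y = 1)
    (h : (x * y) * (x * y) = 1) : x * y = y * x := by
  have := inv_eq_self h
  rw [mul_inv_rev, inv_eq_self hx, inv_eq_self hy] at this
  exact this.symm

lemma hard (e : FreeGroup E7)
    (he : psi e ∈ (Subgroup.normalClosure (Rpres 1)).prod (Subgroup.normalClosure (Rpres 1))) :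
    iota e ∈ Subgroup.normalClosure (Rpres 2) := by
  obtain ⟨rac, radac⟩ := rels2
  have R := rels 2
  set Q := QuotientGroup.mk' (Subgroup.normalClosure (Rpres 2)) with hQ
  simp only [map_mul] at rac radac
  obtain ⟨A, hA⟩ : ∃ A, A = Q ga := ⟨_, rfl⟩
  obtain ⟨B, hB⟩ : ∃ A, A = Q gb := ⟨_, rfl⟩
  obtain ⟨C, hC⟩ : ∃ A, A = Q gc := ⟨_, rfl⟩
  obtain ⟨D, hD⟩ : ∃ A, A = Q gd := ⟨_, rfl⟩
  rw [← hA, ← hB, ← hC, ← hD] at R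
  rw [← hA, ← hC] at rac
  rw [← hA, ← hC, ← hD] at radac
  have ca := canc R.a
  have cb := canc R.b
  have cc := canc R.c
  have cd := canc R.d
  obtain ⟨hC1, hBD⟩ := R.comm
  have hCD : C * D = D * C := by rw [hC1, ← mul_assoc, ← hBD]
  have hBeq : B = C * D := by rw [hC1, mul_assoc, R.d, mul_one]
  have sa : sigma ga = ga * gc * ga := by simp [sigma, ga]
  have sb : sigma gb = gd := by simp [sigma, gb]
  have sc : sigma gc = gb := by simp [sigma, gc]
  have sd : sigma gd = gc := by simp [sigma, gd]
  have invq : (A * C * A) * (A * C * A) = 1 := by simp only [mul_assoc, ca, cc, R.a]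
  have invr : (A * D * A) * (A * D * A) = 1 := by simp only [mul_assoc, ca, cd, R.a]
  -- the two substitutions
  let S : F4 →* F4 ⧸ Subgroup.normalClosure (Rpres 2) := Q.comp sigma
  have Sa : S ga = A * C * A := by simp [S, sa, hA, hC]
  have Sb : S gb = D := by simp [S, sb, hD]
  have Sc : S gc = B := by simp [S, sc, hB]
  have Sd : S gd = C := by simp [S, sd, hC]
  have Sker : Subgroup.normalClosure (Rpres 1) ≤ S.ker := by
    apply lift1
    · rw [Sa]; exact invq
    · rw [Sb]; exact R.d
    · rw [Sc]; exact R.b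
    · rw [Sd]; exact R.c
    · rw [Sb, Sc, Sd, hBeq, hCD]; simp only [mul_assoc, cd, R.c]
    · rw [Sa, Sd]; exact rac
  let S1 : F4 →* F4 ⧸ Subgroup.normalClosure (Rpres 2) := (MulAut.conj A).toMonoidHom.comp S
  have S1' : ∀ x, S1 x = A * S x * A := by
    intro x; simp [S1, inv_eq_self R.a]
  have S1a : S1 ga = C := by rw [S1', Sa]; simp only [mul_assoc, ca, R.a, mul_one]
  have S1b : S1 gb = A * D * A := by rw [S1', Sb]
  have S1c : S1 gc = A * B * A := by rw [S1', Sc]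
  have S1d : S1 gd = A * C * A := by rw [S1', Sd]
  have S1ker : ∀ x ∈ Subgroup.normalClosure (Rpres 1), S1 x = 1 := by
    intro x hx
    rw [S1', show S x = 1 from Sker hx, mul_one, R.a]
  let ρ1 : FreeGroup E7 →* _ := S1.comp ((MonoidHom.fst F4 F4).comp psi)
  let ρ2 : FreeGroup E7 →* _ := S.comp ((MonoidHom.snd F4 F4).comp psi)
  let j : FreeGroup E7 →* _ := Q.comp iota
  -- normalizer
  have invad : (A * D) * (A * D) * ((A * D) * (A * D)) = 1 := by
    rw [← R.ad]; simp only [pow_succ, pow_zero, one_mul, mul_assoc]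
  obtain ⟨nc, nq, nr⟩ := norms (d := D) (p := C) (q := A * C * A) (r := A * D * A)
    R.c invq invr R.d hCD
    (by
      calc A * C * A * (A * D * A) = A * (C * D) * A := by simp only [mul_assoc, ca]
        _ = A * (D * C) * A := by rw [hCD]
        _ = _ := by simp only [mul_assoc, ca])
    (by
      refine swap_comm invr R.d ?_
      rw [← invad]; simp only [mul_assoc])
    rac
    (by
      refine swap_comm invr ?_ ?_
      · simp only [mul_assoc, ca, cc, cd, R.c]
      · rw [← radac]
        simp only [pow_succ, pow_zero, one_mul, mul_assoc, ca])
  set N := DD D C (A * C * A) with hN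
  have m0 : D ∈ N := Subgroup.subset_closure (by simp)
  have nab : A * B * A ∈ Subgroup.normalizer (N : Set _) := by
    have : A * B * A = (A * C * A) * (A * D * A) := by
      rw [hBeq]; simp only [mul_assoc, ca]
    rw [this]; exact mul_mem nq nr
  have gen : ∀ x : E7, ρ1 (FreeGroup.of x) ∈ Subgroup.normalizer (N : Set _) ∧
      j (FreeGroup.of x) * (ρ1 (FreeGroup.of x))⁻¹ ∈ N := by
    intro x
    cases x <;> simp only [ρ1, j, MonoidHom.comp_apply, psi, iota, FreeGroup.lift_apply_of,
      MonoidHom.coe_fst, S1a, S1b, S1c, S1d, map_mul, map_pow, map_one, ← hA, ← hB, ← hC, ← hD]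
    · refine ⟨nc, ?_⟩
      rw [hBeq, hCD, mul_assoc, mul_inv_cancel, mul_one]; exact m0
    · exact ⟨nc, by simp⟩
    · exact ⟨one_mem _, by simpa using m0⟩
    · exact ⟨nab, by simp⟩
    · exact ⟨nq, by simp⟩
    · exact ⟨nr, by simp⟩
    · exact ⟨one_mem _, by simp [pow_two, R.a]⟩
  have all : ∀ e, ρ1 e ∈ Subgroup.normalizer (N : Set _) ∧ j e * (ρ1 e)⁻¹ ∈ N := by
    intro e
    induction e using FreeGroup.induction_on with
    | C1 => simp
    | of x => exact gen x
    | inv_of x h =>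
      obtain ⟨h1, h2⟩ := gen x
      refine ⟨by rw [map_inv]; exact inv_mem h1, ?_⟩
      have := (Subgroup.mem_normalizer_iff.1 (inv_mem h1) _).1 (inv_mem h2)
      simpa [mul_assoc] using this
    | mul x y hx hy =>
      refine ⟨by rw [map_mul]; exact mul_mem hx.1 hy.1, ?_⟩
      have := mul_mem hx.2 ((Subgroup.mem_normalizer_iff.1 hx.1 _).1 hy.2)
      simpa [mul_assoc] using this
  rw [Subgroup.mem_prod] at he
  have r1 : ρ1 e = 1 := S1ker _ he.1
  have r2 : ρ2 e = 1 := Sker he.2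
  have jN : j e ∈ N := by simpa [r1] using (all e).2
  have NL : N ≤ (MonoidHom.eqLocus j ρ2).map j := by
    have hc : FreeGroup.of E7.ec ∈ MonoidHom.eqLocus j ρ2 := by
      change j _ = ρ2 _
      simp [j, ρ2, iota, psi, Sd, hC]
    have hd : FreeGroup.of E7.ed ∈ MonoidHom.eqLocus j ρ2 := by
      change j _ = ρ2 _
      simp [j, ρ2, iota, psi, Sb, hD]
    have hq : FreeGroup.of E7.eaca ∈ MonoidHom.eqLocus j ρ2 := by
      change j _ = ρ2 _
      simp [j, ρ2, iota, psi, Sa, hC, hA]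
    have hc' := Subgroup.mem_map_of_mem j hc
    have hd' := Subgroup.mem_map_of_mem j hd
    have hq' := Subgroup.mem_map_of_mem j hq
    rw [show j (FreeGroup.of E7.ec) = C by simp [j, iota, hC]] at hc'
    rw [show j (FreeGroup.of E7.ed) = D by simp [j, iota, hD]] at hd'
    rw [show j (FreeGroup.of E7.eaca) = A * C * A by simp [j, iota, hA, hC]] at hq'
    rw [hN, DD, Subgroup.closure_le]
    rintro y (rfl | rfl | rfl | rfl)
    · exact hd'
    · exact mul_mem (mul_mem hq' hd') hq'
    · exact mul_mem (mul_mem (mul_mem (mul_mem hc' hq') hd') hq') hc'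
    · exact mul_mem (mul_mem (mul_mem (mul_mem (mul_mem (mul_mem hq' hc') hq') hd') hq') hc') hq'
  obtain ⟨z, hz, hzj⟩ := NL jN
  have hz' : j z = ρ2 z := hz
  have h3 : iota (z * e⁻¹) ∈ Subgroup.normalClosure (Rpres 2) := by
    refine (QuotientGroup.eq_one_iff _).1 ?_
    change j (z * e⁻¹) = 1
    rw [map_mul, map_inv, hzj, mul_inv_cancel]
  have h4 := easy _ h3
  rw [Subgroup.mem_prod] at h4
  have h5 : ρ2 (z * e⁻¹) = 1 := Sker h4.2
  rw [map_mul, map_inv, r2, inv_one, mul_one] at h5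
  refine (QuotientGroup.eq_one_iff _).1 ?_
  change j e = 1
  rw [← hzj, hz', h5]

end KerPsi

theorem ker_psi_one :
    ∀ e : FreeGroup E7,
      psi e ∈ (Subgroup.normalClosure (Rpres 1)).prod
                (Subgroup.normalClosure (Rpres 1)) ↔
        iota e ∈ Subgroup.normalClosure (Rpres 2) := by
  exact fun e => ⟨KerPsi.hard e, KerPsi.easy e⟩
end
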